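/- arXiv:2503.12275 — 7 statements merged into one kernel-verified Lean document; each statement's English description precedes it below -/
import Mathlib

section
/- Let n and d be positive integers with d ≤ n. For every symmetric polynomial f ∈ ℝ[X_1,…,X_n] of total degree at most d there exists a unique polynomial g ∈ ℝ[Z_1,…,Z_d] such that f = g(p_1,…,p_d), where p_j = X_1^j + X_2^j + ⋯ + X_n^j denotes the j-th power sum polynomial. -/
open MvPolynomial

/-- Elementary symmetric polynomials are polynomials in the power sums (Newton). -/
lemma esymm_mem_aux (n d : ℕ) (k : ℕ) (hk : k ≤ d) :
    esymm (Fin n) ℝ k ∈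
      (aeval (R := ℝ) (fun j : Fin d => psum (Fin n) ℝ ((j : ℕ) + 1))).range := by
  induction k using Nat.strong_induction_on with
  | _ k ih =>
    rcases Nat.eq_zero_or_pos k with rfl | hpos
    · rw [esymm_zero]; exact one_mem _
    have h := mul_esymm_eq_sum (Fin n) ℝ k
    have h2 : esymm (Fin n) ℝ k = ((k : ℝ)⁻¹) • ((k : MvPolynomial (Fin n) ℝ) * esymm (Fin n) ℝ k) := by
      have : (k : MvPolynomial (Fin n) ℝ) = C (k : ℝ) := by simp
      rw [this, ← smul_eq_C_mul, smul_smul, inv_mul_cancel₀ (by positivity), one_smul]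
    rw [h2, h]
    refine Subalgebra.smul_mem _ (mul_mem (pow_mem (neg_mem (one_mem _)) _)
      (sum_mem fun a ha => ?_)) _
    rw [Finset.mem_filter, Finset.HasAntidiagonal.mem_antidiagonal] at ha
    refine mul_mem (mul_mem (pow_mem (neg_mem (one_mem _)) _) (ih _ ha.2 (by omega))) ?_
    refine ⟨X ⟨a.2 - 1, by omega⟩, ?_⟩
    have : a.2 - 1 + 1 = a.2 := by omega
    simp [this]

/-- Power sums are polynomials in the elementary symmetric polynomials (Newton). -/
lemma psum_mem_aux (n d : ℕ) (k : ℕ) (hpos : 0 < k) (hk : k ≤ d) :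
    psum (Fin n) ℝ k ∈
      (aeval (R := ℝ) (fun j : Fin d => esymm (Fin n) ℝ ((j : ℕ) + 1))).range := by
  have he : ∀ m, 0 < m → m ≤ d → esymm (Fin n) ℝ m ∈
      (aeval (R := ℝ) (fun j : Fin d => esymm (Fin n) ℝ ((j : ℕ) + 1))).range := by
    intro m h0 hm
    refine ⟨X ⟨m - 1, by omega⟩, ?_⟩
    have : m - 1 + 1 = m := by omega
    simp [this]
  induction k using Nat.strong_induction_on with
  | _ k ih =>
    rw [psum_eq_mul_esymm_sub_sum (Fin n) ℝ k hpos]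
    refine sub_mem (mul_mem (mul_mem (pow_mem (neg_mem (one_mem _)) _) (natCast_mem _ _))
      (he k hpos hk)) (sum_mem fun a ha => ?_)
    rw [Finset.mem_filter, Finset.HasAntidiagonal.mem_antidiagonal, Set.mem_Ioo] at ha
    exact mul_mem (mul_mem (pow_mem (neg_mem (one_mem _)) _) (he _ ha.2.1 (by omega)))
      (ih _ (by omega) (by omega) (by omega))

lemma aeval_esymm_injective_aux (n d : ℕ) (hdn : d ≤ n) :
    Function.Injective (aeval (R := ℝ) (fun j : Fin d => esymm (Fin n) ℝ ((j : ℕ) + 1))) := by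
  intro a b hab
  apply esymmAlgHom_fin_injective ℝ hdn
  apply Subtype.ext
  have h1 := esymmAlgHom_apply (σ := Fin n) (R := ℝ) a
  have h2 := esymmAlgHom_apply (σ := Fin n) (R := ℝ) b
  exact h1.trans (hab.trans h2.symm)

/-- A surjective ring endomorphism of a Noetherian ring is injective. -/
lemma noeth_injective_aux {A : Type*} [CommRing A] [IsNoetherianRing A] (φ : A →+* A)
    (hφ : Function.Surjective φ) : Function.Injective φ := by
  let F : ℕ →o Ideal A := ⟨fun k => RingHom.ker (φ ^ k), monotone_nat_of_le_succ fun k x hx => by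
    rw [RingHom.mem_ker] at hx ⊢
    rw [pow_succ', RingHom.mul_def, RingHom.comp_apply, hx, map_zero]⟩
  obtain ⟨N, hN⟩ := monotone_stabilizes_iff_noetherian.2 (inferInstance : IsNoetherian A A) F
  rw [injective_iff_map_eq_zero]
  intro x hx
  obtain ⟨y, hy⟩ : ∃ y, (φ ^ N) y = x := by
    rw [RingHom.coe_pow]
    exact hφ.iterate N x
  have h1 : y ∈ F (N + 1) := by
    change y ∈ RingHom.ker (φ ^ (N + 1))
    rw [RingHom.mem_ker, pow_succ', RingHom.mul_def, RingHom.comp_apply, hy, hx]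
  rw [← hN (N + 1) (Nat.le_succ N)] at h1
  change y ∈ RingHom.ker (φ ^ N) at h1
  rw [RingHom.mem_ker, hy] at h1
  exact h1

lemma aeval_psum_injective_aux (n d : ℕ) (hdn : d ≤ n) :
    Function.Injective (aeval (R := ℝ) (fun j : Fin d => psum (Fin n) ℝ ((j : ℕ) + 1))) := by
  have hE := aeval_esymm_injective_aux n d hdn
  set E := aeval (R := ℝ) (fun j : Fin d => esymm (Fin n) ℝ ((j : ℕ) + 1)) with hEdef
  set P := aeval (R := ℝ) (fun j : Fin d => psum (Fin n) ℝ ((j : ℕ) + 1)) with hPdef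
  have h1 : ∀ j : Fin d, ∃ q, P q = esymm (Fin n) ℝ ((j : ℕ) + 1) :=
    fun j => esymm_mem_aux n d _ (by omega)
  have h2 : ∀ j : Fin d, ∃ q, E q = psum (Fin n) ℝ ((j : ℕ) + 1) :=
    fun j => psum_mem_aux n d _ (by omega) (by omega)
  choose u hu using h1
  choose v hv using h2
  have hEP : P.comp (aeval u) = E := by
    ext1 i
    simp [hu, hEdef]
  have hPE : E.comp (aeval v) = P := by
    ext1 i
    simp [hv, hPdef]
  have hsurj : Function.Surjective (aeval (R := ℝ) v) := by
    intro q
    refine ⟨aeval u q, hE ?_⟩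
    rw [← AlgHom.comp_apply, hPE, ← AlgHom.comp_apply, hEP]
  have hinj := noeth_injective_aux
    (aeval (R := ℝ) v).toRingHom hsurj
  rw [← hPE]
  exact hE.comp hinj

lemma esymm_hom_aux (n k : ℕ) : (esymm (Fin n) ℝ k).IsHomogeneous k := by
  unfold esymm
  refine IsHomogeneous.sum _ _ _ fun s hs => ?_
  have := IsHomogeneous.prod s (fun i => (X i : MvPolynomial (Fin n) ℝ)) (fun _ => 1)
    (fun i _ => isHomogeneous_X _ _)
  rw [Finset.mem_powersetCard] at hs
  simpa [hs.2] using this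

lemma exists_aux (n d : ℕ) (f : MvPolynomial (Fin n) ℝ) (hsym : f.IsSymmetric)
    (hdeg : f.totalDegree ≤ d) :
    f ∈ (aeval (R := ℝ) (fun j : Fin d => psum (Fin n) ℝ ((j : ℕ) + 1))).range := by
  obtain ⟨q, hq⟩ := (esymmAlgHom_fin_bijective ℝ n).2 ⟨f, hsym⟩
  have hq' : aeval (fun j : Fin n => esymm (Fin n) ℝ ((j : ℕ) + 1)) q = f := by
    rw [← esymmAlgHom_apply, hq]
  have hhom : ∀ t : Fin n →₀ ℕ, ∀ c : ℝ,
      (aeval (fun j : Fin n => esymm (Fin n) ℝ ((j : ℕ) + 1)) (monomial t c)).IsHomogeneous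
        (∑ i ∈ t.support, ((i : ℕ) + 1) * t i) := by
    intro t c
    rw [aeval_monomial, Finsupp.prod]
    have := (isHomogeneous_C (Fin n) c).mul (IsHomogeneous.prod t.support
      (fun i => esymm (Fin n) ℝ ((i : ℕ) + 1) ^ t i) (fun i => ((i : ℕ) + 1) * t i)
      (fun i _ => (esymm_hom_aux n _).pow _))
    rwa [zero_add] at this
  have hsum : ∑ k ∈ Finset.range (d + 1), homogeneousComponent k f = f := by
    conv_rhs => rw [← sum_homogeneousComponent f]
    symm
    apply Finset.sum_subset
    · intro k; simp only [Finset.mem_range]; omega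
    · intro k _ hk
      apply homogeneousComponent_eq_zero
      simp only [Finset.mem_range] at hk
      omega
  rw [← hsum]
  refine sum_mem fun k hk => ?_
  rw [Finset.mem_range] at hk
  rw [← hq', q.as_sum, map_sum, map_sum]
  refine sum_mem fun t _ => ?_
  rw [homogeneousComponent_of_mem (hhom t _)]
  split_ifs with h
  · rw [aeval_monomial, Finsupp.prod]
    refine mul_mem (Subalgebra.algebraMap_mem _ _) (prod_mem fun i hi => pow_mem ?_ _)
    apply esymm_mem_aux
    have h3 := Finset.single_le_sum (f := fun i : Fin n => ((i : ℕ) + 1) * t i)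
      (fun _ _ => Nat.zero_le _) hi
    have h4 : 1 ≤ t i := Nat.one_le_iff_ne_zero.2 (Finsupp.mem_support_iff.1 hi)
    have h5 : (i : ℕ) + 1 ≤ ((i : ℕ) + 1) * t i := Nat.le_mul_of_pos_right _ h4
    omega
  · exact zero_mem _

/-- For `0 < d ≤ n`, every symmetric polynomial
`f ∈ ℝ[X_1,…,X_n]` of total degree at most `d` can be written uniquely as
`g(p_1,…,p_d)` where `p_j` is the `j`-th power sum polynomial. -/
theorem unique_powerSum_representation (n d : ℕ) (hn : 0 < n) (hd : 0 < d) (hdn : d ≤ n)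
    (f : MvPolynomial (Fin n) ℝ) (hsym : f.IsSymmetric) (hdeg : f.totalDegree ≤ d) :
    ∃! g : MvPolynomial (Fin d) ℝ,
      MvPolynomial.aeval (fun j : Fin d => MvPolynomial.psum (Fin n) ℝ ((j : ℕ) + 1)) g = f := by
  obtain ⟨g, hg⟩ := exists_aux n d f hsym hdeg
  refine ⟨g, hg, fun g' hg' => aeval_psum_injective_aux n d hdn ?_⟩
  exact hg'.trans hg.symm
end

section
/- The restriction to the canonical Weyl chamber W_c of the Vandermonde map ν : ℝⁿ → ℝⁿ, x ↦ (p_1(x),…,p_n(x)), is a topological embedding; that is, ν restricted to W_c is a homeomorphism onto its image. -/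
/-- The Vandermonde map `ν : ℝⁿ → ℝⁿ`, `x ↦ (p_1(x),…,p_n(x))`. -/
noncomputable def vandermondeMap (n : ℕ) (x : Fin n → ℝ) : Fin n → ℝ :=
  fun j => ∑ i, x i ^ ((j : ℕ) + 1)

theorem esymm_eq_of_vandermonde {n : ℕ} {x y : Fin n → ℝ}
    (h : vandermondeMap n x = vandermondeMap n y) (k : ℕ) (hk : k ≤ n) :
    MvPolynomial.aeval x (MvPolynomial.esymm (Fin n) ℝ k) =
      MvPolynomial.aeval y (MvPolynomial.esymm (Fin n) ℝ k) := by
  induction k using Nat.strong_induction_on with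
  | _ k ih =>
    rcases Nat.eq_zero_or_pos k with rfl | hpos
    · simp
    have hx := congrArg (MvPolynomial.aeval x) (MvPolynomial.mul_esymm_eq_sum (Fin n) ℝ k)
    have hy := congrArg (MvPolynomial.aeval y) (MvPolynomial.mul_esymm_eq_sum (Fin n) ℝ k)
    have key : (k : ℝ) * MvPolynomial.aeval x (MvPolynomial.esymm (Fin n) ℝ k) =
        (k : ℝ) * MvPolynomial.aeval y (MvPolynomial.esymm (Fin n) ℝ k) := by
      simp only [map_mul, map_natCast, map_pow, map_neg, map_one, map_sum] at hx hy
      rw [hx, hy]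
      congr 1
      refine Finset.sum_congr rfl fun a ha => ?_
      simp only [Finset.mem_filter] at ha
      have hs : a.1 + a.2 = k := Finset.HasAntidiagonal.mem_antidiagonal.mp ha.1
      rw [ih a.1 ha.2 (by omega)]
      congr 1
      have h2 := congrFun h ⟨a.2 - 1, by omega⟩
      simp only [vandermondeMap] at h2
      rw [show a.2 - 1 + 1 = a.2 by omega] at h2
      simpa [MvPolynomial.psum] using h2
    exact mul_left_cancel₀ (by positivity) key

theorem vandermonde_injOn {n : ℕ} {x y : Fin n → ℝ} (hx : Monotone x) (hy : Monotone y)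
    (h : vandermondeMap n x = vandermondeMap n y) : x = y := by
  have hm : Finset.univ.val.map x = Finset.univ.val.map y := by
    rw [← Polynomial.roots_multiset_prod_X_sub_C (Finset.univ.val.map x),
      ← Polynomial.roots_multiset_prod_X_sub_C (Finset.univ.val.map y),
      Multiset.prod_X_sub_X_eq_sum_esymm, Multiset.prod_X_sub_X_eq_sum_esymm]
    congr 1
    simp only [Multiset.card_map]
    refine Finset.sum_congr rfl fun j hj => ?_
    have hj' : j ≤ n := by simpa [Nat.lt_succ_iff] using hj
    have := esymm_eq_of_vandermonde h j hj'
    rw [MvPolynomial.aeval_esymm_eq_multiset_esymm,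
      MvPolynomial.aeval_esymm_eq_multiset_esymm] at this
    rw [this]
  rw [Fin.univ_val_map, Fin.univ_val_map, Multiset.coe_eq_coe] at hm
  exact List.ofFn_injective (List.Perm.eq_of_sortedLE hx.sortedLE_ofFn hy.sortedLE_ofFn hm)

theorem vandermonde_bound {n : ℕ} {x : Fin n → ℝ} {R : ℝ}
    (h : ‖vandermondeMap n x‖ ≤ R) : ‖x‖ ≤ 1 + R := by
  have hR : 0 ≤ R := (norm_nonneg _).trans h
  rw [pi_norm_le_iff_of_nonneg hR] at h
  rw [pi_norm_le_iff_of_nonneg (by linarith)]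
  intro i
  rcases Nat.lt_or_ge 1 n with hn | hn
  · have h2 := (le_abs_self _).trans (h ⟨1, hn⟩)
    have h3 : x i ^ 2 ≤ vandermondeMap n x ⟨1, hn⟩ :=
      Finset.single_le_sum (f := fun i => x i ^ 2) (fun j _ => sq_nonneg (x j)) (Finset.mem_univ i)
    rw [Real.norm_eq_abs]
    have h4 : x i ^ 2 ≤ (1 + R) ^ 2 := by nlinarith
    exact abs_le_of_sq_le_sq h4 (by linarith)
  · obtain rfl : n = 1 := by have := i.2; omega
    have h2 := h 0
    have : i = 0 := Subsingleton.elim _ _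
    subst this
    simp [vandermondeMap] at h2
    rw [Real.norm_eq_abs]
    linarith

theorem vandermonde_continuous (n : ℕ) : Continuous (vandermondeMap n) := by
  unfold vandermondeMap
  fun_prop

/-- The restriction of the Vandermonde map to the canonical Weyl
chamber `W_c = {x : x_1 ≤ ⋯ ≤ x_n}` is a topological embedding, i.e. a
homeomorphism onto its image. -/
theorem vandermonde_restrict_isEmbedding (n : ℕ) :
    Topology.IsEmbedding (Set.restrict {x : Fin n → ℝ | Monotone x} (vandermondeMap n)) := by
  have hc : Continuous (Set.restrict {x : Fin n → ℝ | Monotone x} (vandermondeMap n)) :=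
    (vandermonde_continuous n).comp continuous_subtype_val
  have hclosed : IsClosed {x : Fin n → ℝ | Monotone x} := isClosed_monotone
  have hp : IsProperMap (Set.restrict {x : Fin n → ℝ | Monotone x} (vandermondeMap n)) := by
    refine isProperMap_iff_isCompact_preimage.mpr ⟨hc, fun K hK => ?_⟩
    obtain ⟨R, hR⟩ := hK.isBounded.exists_norm_le
    refine (hclosed.isClosedEmbedding_subtypeVal.isCompact_preimage
      (isCompact_closedBall (0 : Fin n → ℝ) (1 + R))).of_isClosed_subset
      (hK.isClosed.preimage hc) fun z hz => ?_
    rw [Set.mem_preimage, mem_closedBall_zero_iff]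
    exact vandermonde_bound (hR _ hz)
  refine (Topology.IsClosedEmbedding.of_continuous_injective_isClosedMap hc ?_
    hp.isClosedMap).isEmbedding
  intro a b hab
  exact Subtype.ext (vandermonde_injOn a.2 b.2 hab)
end

section
/- Let ℓ be a positive integer and let m_1,…,m_ℓ be positive integers. The weighted Vandermonde map ℝ^ℓ → ℝ^ℓ, x ↦ (Σ_{i=1}^ℓ m_i x_i, Σ_{i=1}^ℓ m_i x_i², …, Σ_{i=1}^ℓ m_i x_i^ℓ), restricted to the set {x ∈ ℝ^ℓ : x_1 ≤ x_2 ≤ ⋯ ≤ x_ℓ}, is a homeomorphism onto its image; in particular it is injective on that set. -/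
/-- The weighted Vandermonde map `x ↦ (p_1^{(m)}(x),…,p_ℓ^{(m)}(x))` with weight
vector `m`, where `p_j^{(m)}(x) = ∑ i, m i * (x i)^j`. -/
noncomputable def weightedVandermondeMap (ℓ : ℕ) (m : Fin ℓ → ℕ) (x : Fin ℓ → ℝ) :
    Fin ℓ → ℝ :=
  fun j => ∑ i, (m i : ℝ) * x i ^ ((j : ℕ) + 1)

open Polynomial in
/-- A nonzero polynomial of degree at most `n` whose sign on the interval between `x i` and `y i`
is that of `x i - y i`, for all `i ≤ n`. -/
lemma exists_sign_poly (x y : ℕ → ℝ) (hx : Monotone x) (hy : Monotone y) (n : ℕ) :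
    ∃ g : ℝ[X], g ≠ 0 ∧ g.natDegree ≤ n ∧
      (∀ i ≤ n, ∀ t, min (x i) (y i) ≤ t → t ≤ max (x i) (y i) →
        (y i ≤ x i → 0 ≤ g.eval t) ∧ (x i < y i → g.eval t ≤ 0)) ∧
      (∀ t, min (x n) (y n) ≤ t →
        (y n ≤ x n → 0 ≤ g.eval t) ∧ (x n < y n → g.eval t ≤ 0)) := by
  induction n with
  | zero =>
    by_cases h : y 0 ≤ x 0
    · refine ⟨1, one_ne_zero, by simp, ?_, ?_⟩
      · intro i hi t _ _
        obtain rfl : i = 0 := by omega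
        exact ⟨fun _ => by simp, fun h' => absurd h (not_le.2 h')⟩
      · intro t _
        exact ⟨fun _ => by simp, fun h' => absurd h (not_le.2 h')⟩
    · refine ⟨-1, by simp, by simp, ?_, ?_⟩
      · intro i hi t _ _
        obtain rfl : i = 0 := by omega
        exact ⟨fun h' => absurd h' h, fun _ => by simp⟩
      · intro t _
        exact ⟨fun h' => absurd h' h, fun _ => by simp⟩
  | succ n ih =>
    obtain ⟨g, g0, gd, h1, h2⟩ := ih
    have hx1 := hx (Nat.le_succ n)
    have hy1 := hy (Nat.le_succ n)
    simp only [Nat.succ_eq_add_one] at hx1 hy1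
    by_cases hs : (y n ≤ x n ↔ y (n+1) ≤ x (n+1))
    · have h3 : ∀ t, min (x (n+1)) (y (n+1)) ≤ t →
          (y (n+1) ≤ x (n+1) → 0 ≤ g.eval t) ∧ (x (n+1) < y (n+1) → g.eval t ≤ 0) := by
        intro t ht
        have := h2 t ((min_le_min hx1 hy1).trans ht)
        rw [← hs, ← not_le, ← hs, not_le]
        exact this
      refine ⟨g, g0, by omega, ?_, h3⟩
      intro i hi t ht1 ht2
      rcases Nat.lt_or_ge n i with h | h
      · obtain rfl : i = n + 1 := by omega
        exact h3 t ht1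
      · exact h1 i h t ht1 ht2
    · have hc : max (x n) (y n) ≤ min (x (n+1)) (y (n+1)) := by
        rcases le_or_gt (y n) (x n) with h | h <;>
        rcases le_or_gt (y (n+1)) (x (n+1)) with h' | h'
        · exact absurd (iff_of_true h h') hs
        · rw [max_eq_left h, min_eq_left h'.le]; exact hx1
        · rw [max_eq_right h.le, min_eq_right h']; exact hy1
        · exact absurd (iff_of_false (not_le.2 h) (not_le.2 h')) hs
      set c := max (x n) (y n) with hcdef
      have h3 : ∀ t, min (x (n+1)) (y (n+1)) ≤ t →
          (y (n+1) ≤ x (n+1) → 0 ≤ (g * (C c - X)).eval t) ∧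
          (x (n+1) < y (n+1) → (g * (C c - X)).eval t ≤ 0) := by
        intro t ht
        have h4 := h2 t (min_le_max.trans (hc.trans ht))
        have h5 : c - t ≤ 0 := by linarith
        simp only [eval_mul, eval_sub, eval_C, eval_X]
        constructor
        · intro h
          have h6 : x n < y n := by
            by_contra h7
            exact hs ⟨fun _ => h, fun _ => not_lt.1 h7⟩
          exact mul_nonneg_of_nonpos_of_nonpos (h4.2 h6) h5
        · intro h
          have h6 : y n ≤ x n := by
            by_contra h7
            exact hs ⟨fun h8 => absurd h8 h7, fun h8 => absurd h8 (not_le.2 h)⟩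
          exact mul_nonpos_of_nonneg_of_nonpos (h4.1 h6) h5
      have hd : (C c - X : ℝ[X]).natDegree ≤ 1 := by
        refine (natDegree_sub_le _ _).trans ?_
        simp
      have hne : (C c - X : ℝ[X]) ≠ 0 := by
        intro h
        have := congrArg (eval (c - 1)) h
        simp at this
      refine ⟨g * (C c - X), mul_ne_zero g0 hne,
        natDegree_mul_le.trans (by omega), ?_, h3⟩
      intro i hi t ht1 ht2
      rcases Nat.lt_or_ge n i with h | h
      · obtain rfl : i = n + 1 := by omega
        exact h3 t ht1
      · have h5 : 0 ≤ c - t := by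
          have := max_le_max (hx h) (hy h)
          linarith
        have h4 := h1 i h t ht1 ht2
        simp only [eval_mul, eval_sub, eval_C, eval_X]
        exact ⟨fun h' => mul_nonneg (h4.1 h') h5,
          fun h' => mul_nonpos_of_nonpos_of_nonneg (h4.2 h') h5⟩

open Polynomial in
lemma exists_eval_ne_zero (g : ℝ[X]) (g0 : g ≠ 0) {a b : ℝ} (hab : a < b) :
    ∃ c ∈ Set.Icc a b, g.eval c ≠ 0 := by
  by_contra! h
  exact g0 (Polynomial.eq_zero_of_infinite_isRoot g
    ((Set.Icc_infinite hab).mono fun c hc => h c hc))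

lemma weightedVandermonde_injOn (ℓ : ℕ) (hℓ : 0 < ℓ)
    (m : Fin ℓ → ℕ) (hm : ∀ i, 0 < m i) :
    Set.InjOn (weightedVandermondeMap ℓ m) {x : Fin ℓ → ℝ | Monotone x} := by
  intro x hx y hy hxy
  have hx : Monotone x := hx
  have hy : Monotone y := hy
  let e : ℕ → Fin ℓ := fun i => ⟨min i (ℓ - 1), by omega⟩
  have he : Monotone e := by
    intro a b hab
    simp only [e, Fin.mk_le_mk]
    omega
  have hei : ∀ i : Fin ℓ, e i = i := by
    intro i
    ext
    simp only [e]
    omega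
  obtain ⟨g, g0, gd, h1, -⟩ := exists_sign_poly (x ∘ e) (y ∘ e) (hx.comp he) (hy.comp he) (ℓ - 1)
  have h1' : ∀ i : Fin ℓ, ∀ t, min (x i) (y i) ≤ t → t ≤ max (x i) (y i) →
        (y i ≤ x i → 0 ≤ g.eval t) ∧ (x i < y i → g.eval t ≤ 0) := by
    intro i
    have := h1 i (by omega)
    simpa only [Function.comp, hei] using this
  have hcont : Continuous fun t => g.eval t := g.continuous
  have hpos : ∀ i, x i ≠ y i → 0 < ∫ t in (y i)..(x i), g.eval t := by
    intro i hne
    rcases lt_or_gt_of_ne hne with h | h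
    · rw [intervalIntegral.integral_symm, ← intervalIntegral.integral_neg]
      have hs : ∀ t ∈ Set.Icc (x i) (y i), 0 ≤ - g.eval t := fun t ht =>
        neg_nonneg.2 ((h1' i t (by simp [ht.1]) (by simp [ht.2])).2 h)
      obtain ⟨c, hc, hc0⟩ := exists_eval_ne_zero g g0 h
      exact intervalIntegral.integral_pos h hcont.neg.continuousOn
        (fun t ht => hs t ⟨ht.1.le, ht.2⟩)
        ⟨c, hc, lt_of_le_of_ne (hs c hc) (by simpa using hc0)⟩
    · have hs : ∀ t ∈ Set.Icc (y i) (x i), 0 ≤ g.eval t := fun t ht =>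
        ((h1' i t (by simp [ht.1]) (by simp [ht.2])).1 h.le)
      obtain ⟨c, hc, hc0⟩ := exists_eval_ne_zero g g0 h
      exact intervalIntegral.integral_pos h hcont.continuousOn
        (fun t ht => hs t ⟨ht.1.le, ht.2⟩)
        ⟨c, hc, lt_of_le_of_ne (hs c hc) hc0.symm⟩
  have hnn : ∀ i, 0 ≤ ∫ t in (y i)..(x i), g.eval t := by
    intro i
    by_cases h : x i = y i
    · simp [h]
    · exact (hpos i h).le
  have hint : ∀ a b : ℝ, ∫ t in a..b, g.eval t =
      ∑ j ∈ Finset.range ℓ, g.coeff j * ((b ^ (j + 1) - a ^ (j + 1)) / (j + 1)) := by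
    intro a b
    have : ∀ t, g.eval t = ∑ j ∈ Finset.range ℓ, g.coeff j * t ^ j := fun t =>
      Polynomial.eval_eq_sum_range' (by omega) t
    simp only [this]
    rw [intervalIntegral.integral_finsetSum]
    · simp
    · intro j _
      exact Continuous.intervalIntegrable (by fun_prop) _ _
  have hsum : ∑ i, (m i : ℝ) * ∫ t in (y i)..(x i), g.eval t = 0 := by
    simp only [hint, Finset.mul_sum]
    rw [Finset.sum_comm]
    refine Finset.sum_eq_zero fun j hj => ?_
    have h := congrFun hxy ⟨j, Finset.mem_range.1 hj⟩
    simp only [weightedVandermondeMap] at h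
    have h2 : ∑ i, (m i : ℝ) * (x i ^ (j + 1) - y i ^ (j + 1)) = 0 := by
      simp only [mul_sub, Finset.sum_sub_distrib, h, sub_self]
    calc _ = ∑ i, (g.coeff j / (j + 1)) * ((m i : ℝ) * (x i ^ (j + 1) - y i ^ (j + 1))) :=
          Finset.sum_congr rfl fun i _ => by ring
      _ = 0 := by rw [← Finset.mul_sum, h2, mul_zero]
  rw [Finset.sum_eq_zero_iff_of_nonneg
    (fun i _ => mul_nonneg (Nat.cast_nonneg _) (hnn i))] at hsum
  funext i
  by_contra hne
  have := mul_pos (Nat.cast_pos.2 (hm i) : (0 : ℝ) < m i) (hpos i hne)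
  exact this.ne' (hsum i (Finset.mem_univ i))

lemma weightedVandermonde_norm_le (ℓ : ℕ) (m : Fin ℓ → ℕ) (hm : ∀ i, 0 < m i) (x : Fin ℓ → ℝ) :
    ‖x‖ ≤ 1 + ‖weightedVandermondeMap ℓ m x‖ := by
  rw [pi_norm_le_iff_of_nonneg (by positivity)]
  intro i
  have hmi : (1 : ℝ) ≤ m i := by exact_mod_cast hm i
  rcases Nat.lt_or_ge 1 ℓ with h | h
  · have h1 := norm_le_pi_norm (weightedVandermondeMap ℓ m x) ⟨1, h⟩
    have h2 : (m i : ℝ) * x i ^ 2 ≤ weightedVandermondeMap ℓ m x ⟨1, h⟩ :=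
      Finset.single_le_sum (f := fun i => (m i : ℝ) * x i ^ 2)
        (fun i _ => by positivity) (Finset.mem_univ i)
    have h3 := (le_abs_self _).trans h1
    have h4 : x i ^ 2 ≤ m i * x i ^ 2 := le_mul_of_one_le_left (sq_nonneg _) hmi
    rw [Real.norm_eq_abs]
    nlinarith [sq_abs (x i), sq_nonneg (|x i| - 1), abs_nonneg (x i)]
  · obtain rfl : ℓ = 1 := by have := i.2; omega
    have h1 := norm_le_pi_norm (weightedVandermondeMap 1 m x) i
    have h2 : weightedVandermondeMap 1 m x i = m i * x i := by
      obtain rfl : i = 0 := Subsingleton.elim _ _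
      simp [weightedVandermondeMap]
    rw [h2, norm_mul, Real.norm_natCast] at h1
    have := le_mul_of_one_le_left (norm_nonneg (x i)) hmi
    linarith


/-- For positive integer weights `m_1, …, m_ℓ`, the weighted
Vandermonde map restricted to `{x : x_1 ≤ ⋯ ≤ x_ℓ}` is a homeomorphism onto its
image (a topological embedding); in particular it is injective on that set. -/
theorem weightedVandermonde_restrict_isEmbedding (ℓ : ℕ) (hℓ : 0 < ℓ)
    (m : Fin ℓ → ℕ) (hm : ∀ i, 0 < m i) :
    Topology.IsEmbedding
        (Set.restrict {x : Fin ℓ → ℝ | Monotone x} (weightedVandermondeMap ℓ m)) ∧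
      Set.InjOn (weightedVandermondeMap ℓ m) {x : Fin ℓ → ℝ | Monotone x} := by
  have hinj := weightedVandermonde_injOn ℓ hℓ m hm
  refine ⟨?_, hinj⟩
  have hclosed : IsClosed {x : Fin ℓ → ℝ | Monotone x} := isClosed_monotone
  have hcont : Continuous (weightedVandermondeMap ℓ m) := by
    unfold weightedVandermondeMap
    fun_prop
  have htend : Filter.Tendsto (weightedVandermondeMap ℓ m)
      (Filter.cocompact _) (Filter.cocompact _) := by
    rw [← Metric.cobounded_eq_cocompact,
      ← tendsto_norm_atTop_iff_cobounded]
    refine Filter.tendsto_atTop_mono (f := fun x : Fin ℓ → ℝ => ‖x‖ - 1) (fun x => ?_) ?_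
    · have := weightedVandermonde_norm_le ℓ m hm x
      linarith
    · exact Filter.tendsto_atTop_add_const_right _ _ tendsto_norm_cobounded_atTop
  have hproper : IsProperMap
      (Set.restrict {x : Fin ℓ → ℝ | Monotone x} (weightedVandermondeMap ℓ m)) :=
    (isProperMap_iff_tendsto_cocompact.2 ⟨hcont, htend⟩).comp
      hclosed.isClosedEmbedding_subtypeVal.isProperMap
  exact (Topology.IsClosedEmbedding.of_continuous_injective_isClosedMap hproper.continuous
    hinj.injective hproper.isClosedMap).isEmbedding
end

section
/- Let n and d be positive integers with d ≤ n. For every a = (a_1,…,a_d) ∈ ℝ^d, the set V(a) ∩ W_c = {x ∈ ℝⁿ : p_j(x) = a_j for j = 1,…,d, and x_1 ≤ x_2 ≤ ⋯ ≤ x_n} is either empty or contractible. -/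
open Polynomial Filter Topology

/-- interlacing polynomial for two monotone sequences. -/
theorem vw_A0 : ∀ (n : ℕ) (u w : Fin n → ℝ), Monotone u → Monotone w → u ≠ w →
    ∃ (s : ℕ) (σ : ℝ) (i : Fin (s+1) → Fin n) (q : ℝ[X]), (σ = 1 ∨ σ = -1) ∧ StrictMono i ∧
      (∀ l : Fin (s+1), 0 < σ * (-1)^(l:ℕ) * (u (i l) - w (i l))) ∧
      (∀ j, j < i 0 → u j = w j) ∧
      q.natDegree = s ∧ q.leadingCoeff = (-1)^s ∧
      (∀ z, z < max (u (i 0)) (w (i 0)) → 0 < q.eval z) ∧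
      (∀ j z, min (u j) (w j) < z → z < max (u j) (w j) → 0 < σ * (u j - w j) * q.eval z) := by
  intro n
  induction n with
  | zero => intro u w _ _ h; exact absurd (Subsingleton.elim u w) h
  | succ n ih =>
    intro u w hu hw hne
    have hu' : Monotone (fun j : Fin n => u j.succ) := fun a b h => hu (Fin.succ_le_succ_iff.2 h)
    have hw' : Monotone (fun j : Fin n => w j.succ) := fun a b h => hw (Fin.succ_le_succ_iff.2 h)
    by_cases ht : (fun j : Fin n => u j.succ) = (fun j : Fin n => w j.succ)
    · have h0 : u 0 ≠ w 0 := by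
        intro h0; apply hne; funext j
        refine Fin.cases h0 (fun j => congrFun ht j) j
      have hsgn : ∃ σ : ℝ, (σ = 1 ∨ σ = -1) ∧ 0 < σ * (u 0 - w 0) := by
        rcases lt_or_gt_of_ne h0 with h | h
        · exact ⟨-1, Or.inr rfl, by linarith⟩
        · exact ⟨1, Or.inl rfl, by linarith⟩
      obtain ⟨σ, hσ, hs⟩ := hsgn
      refine ⟨0, σ, fun _ => 0, 1, hσ, ?_, ?_, ?_, by simp, by simp, by simp, ?_⟩
      · intro a b h; omega
      · intro l; have : (l:ℕ) = 0 := by omega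
        simpa [this] using hs
      · intro j hj; exact absurd hj (by simp)
      · intro j z h1 h2
        induction j using Fin.cases with
        | zero => simpa using hs
        | succ j => 
          have := congrFun ht j
          rw [this] at h1 h2; simp at h1 h2; linarith
    · obtain ⟨s, σ, i, q, hσ, hi, hch, hbot, hdeg, hlc, hpos, hall⟩ := ih _ _ hu' hw' ht
      have hd0 := hch 0
      simp only [Fin.val_zero, pow_zero, mul_one] at hd0
      have hu0 : u 0 ≤ u (i 0).succ := hu (Fin.zero_le _)
      have hw0 : w 0 ≤ w (i 0).succ := hw (Fin.zero_le _)
      have hmm : max (u 0) (w 0) ≤ max (u (i 0).succ) (w (i 0).succ) := max_le_max hu0 hw0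
      by_cases h0 : u 0 = w 0
      · refine ⟨s, σ, fun l => (i l).succ, q, hσ, ?_, hch, ?_, hdeg, hlc, hpos, ?_⟩
        · intro a b h; exact Fin.succ_lt_succ_iff.2 (hi h)
        · intro j
          induction j using Fin.cases with
          | zero => intro _; exact h0
          | succ j => intro h; exact hbot j (Fin.succ_lt_succ_iff.1 h)
        · intro j z
          induction j using Fin.cases with
          | zero => intro h1 h2; rw [h0] at h1 h2; simp at h1 h2; linarith
          | succ j => exact hall j z
      · by_cases hsame : 0 < σ * (u 0 - w 0)
        · -- same sign: replace head
          refine ⟨s, σ, fun l => if l = 0 then 0 else (i l).succ, q, hσ, ?_, ?_, ?_, hdeg, hlc, ?_, ?_⟩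
          · intro a b h
            have hb : b ≠ 0 := by intro hb; subst hb; simp at h
            by_cases ha : a = 0
            · simp [ha, hb]
            · simp [ha, hb]; exact hi h
          · intro l
            by_cases hl : l = 0
            · subst hl; simpa using hsame
            · simpa [hl] using hch l
          · intro j hj; simp at hj
          · intro z hz; simp at hz; apply hpos; exact lt_of_lt_of_le (by simpa using hz) hmm
          · intro j z
            induction j using Fin.cases with
            | zero => intro h1 h2; exact mul_pos hsame (hpos z (lt_of_lt_of_le h2 hmm))
            | succ j => exact hall j z
        · -- opposite sign: add a root
          have hopp : 0 < (-σ) * (u 0 - w 0) := by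
            have : σ * (u 0 - w 0) ≠ 0 := by
              apply mul_ne_zero
              · rcases hσ with h | h <;> simp [h]
              · exact sub_ne_zero.2 h0
            have := lt_of_le_of_ne (not_lt.1 hsame) this
            linarith
          have hsep : max (u 0) (w 0) ≤ min (u (i 0).succ) (w (i 0).succ) := by
            rcases hσ with h | h
            · subst h
              apply max_le <;> apply le_min <;> linarith
            · subst h
              apply max_le <;> apply le_min <;> linarith
          have hq0 : q ≠ 0 := by
            intro h; rw [h] at hlc; simp at hlc
            exact absurd hlc.symm (by positivity)
          have hfd : (C (max (u 0) (w 0)) - X : ℝ[X]).natDegree = 1 := by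
            rw [natDegree_sub, natDegree_X_sub_C]
          have hf0 : (C (max (u 0) (w 0)) - X : ℝ[X]) ≠ 0 := by
            intro h; rw [h] at hfd; simp at hfd
          have hfl : (C (max (u 0) (w 0)) - X : ℝ[X]).leadingCoeff = -1 := by
            rw [← neg_sub, leadingCoeff_neg, leadingCoeff_X_sub_C]
          refine ⟨s+1, -σ, Fin.cons 0 (fun l => (i l).succ), (C (max (u 0) (w 0)) - X) * q, ?_, ?_, ?_, ?_, ?_, ?_, ?_, ?_⟩
          · rcases hσ with h | h <;> simp [h]
          · intro a b
            induction b using Fin.cases with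
            | zero => intro h; simp at h
            | succ b =>
              induction a using Fin.cases with
              | zero => intro _; simp
              | succ a => intro h; simp; exact hi (Fin.succ_lt_succ_iff.1 h)
          · intro l
            induction l using Fin.cases with
            | zero => simpa using hopp
            | succ l => 
              have := hch l
              simp only [Fin.cons_succ, Fin.val_succ, pow_succ]
              linarith
          · intro j hj; simp at hj
          · rw [natDegree_mul hf0 hq0, hfd, hdeg]; ring
          · rw [leadingCoeff_mul, hfl, hlc, pow_succ]; ring
          · intro z hz
            simp only [Fin.cons_zero] at hz
            simp only [eval_mul, eval_sub, eval_C, eval_X]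
            exact mul_pos (by linarith) (hpos z (lt_of_lt_of_le hz hmm))
          · intro j z
            simp only [eval_mul, eval_sub, eval_C, eval_X]
            induction j using Fin.cases with
            | zero =>
              intro h1 h2
              have := mul_pos hopp (mul_pos (sub_pos.2 h2) (hpos z (lt_of_lt_of_le h2 hmm)))
              exact this
            | succ j =>
              intro h1 h2
              have h3 := hall j z h1 h2
              have hj : i 0 ≤ j := by
                by_contra hlt
                have := hbot j (not_le.1 hlt)
                rw [this] at h1 h2; simp at h1 h2; linarith
              have h4 : min (u (i 0).succ) (w (i 0).succ) ≤ min (u j.succ) (w j.succ) :=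
                min_le_min (hu' hj) (hw' hj)
              have h5 : 0 < z - max (u 0) (w 0) := by linarith
              have := mul_pos h3 h5
              linarith

theorem vw_A1 (n k : ℕ) (u w μ : Fin n → ℝ) (hu : Monotone u) (hw : Monotone w) (hne : u ≠ w)
    (hμ : ∀ i, 0 < μ i) (hm : ∀ j < k, ∑ i, μ i * u i ^ (j+1) = ∑ i, μ i * w i ^ (j+1)) :
    ∃ (s : ℕ) (σ : ℝ) (i : Fin (s+1) → Fin n), k ≤ s ∧ (σ = 1 ∨ σ = -1) ∧ StrictMono i ∧
      (∀ l : Fin (s+1), 0 < σ * (-1)^(l:ℕ) * (u (i l) - w (i l))) ∧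
      (s = k → 0 < σ * (-1)^k * (∑ i, μ i * u i ^ (k+1) - ∑ i, μ i * w i ^ (k+1))) := by
  obtain ⟨s, σ, i, q, hσ, hi, hch, -, hdeg, hlc, -, hall⟩ := vw_A0 n u w hu hw hne
  set Q : ℝ → ℝ := fun z => ∑ j ∈ Finset.range (s+1), q.coeff j / (j+1) * z^(j+1) with hQ
  have hder : ∀ z, HasDerivAt Q (q.eval z) z := by
    intro z
    rw [eval_eq_sum_range, hdeg]
    apply HasDerivAt.fun_sum
    intro j _
    have := (hasDerivAt_pow (j+1) z).const_mul (q.coeff j / (j+1))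
    refine this.congr_deriv ?_
    have : (j:ℝ)+1 ≠ 0 := by positivity
    rw [Nat.add_sub_cancel]; push_cast; field_simp
  have hcont : Continuous Q := continuous_iff_continuousAt.2 fun z => (hder z).continuousAt
  have key : ∀ j, u j ≠ w j → 0 < σ * (Q (u j) - Q (w j)) := by
    intro j hj
    rcases lt_or_gt_of_ne hj with h | h
    · obtain ⟨z, hz, he⟩ := exists_hasDerivAt_eq_slope Q (fun z => q.eval z) h hcont.continuousOn
        (fun x _ => hder x)
      have h1 := hall j z (by rw [min_eq_left h.le]; exact hz.1) (by rw [max_eq_right h.le]; exact hz.2)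
      have : w j - u j ≠ 0 := by linarith
      rw [eq_div_iff this] at he
      have h2 : Q (u j) - Q (w j) = (u j - w j) * q.eval z := by linarith
      rw [h2, ← mul_assoc]; exact h1
    · obtain ⟨z, hz, he⟩ := exists_hasDerivAt_eq_slope Q (fun z => q.eval z) h hcont.continuousOn
        (fun x _ => hder x)
      have h1 := hall j z (by rw [min_eq_right h.le]; exact hz.1) (by rw [max_eq_left h.le]; exact hz.2)
      have : u j - w j ≠ 0 := by linarith
      rw [eq_div_iff this] at he
      rw [← he, mul_comm (q.eval z), ← mul_assoc]; exact h1
  have hsum : 0 < ∑ j, μ j * (σ * (Q (u j) - Q (w j))) := by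
    apply Finset.sum_pos'
    · intro j _
      by_cases h : u j = w j
      · simp [h]
      · exact (mul_pos (hμ j) (key j h)).le
    · obtain ⟨j, hj⟩ := Function.ne_iff.1 hne
      exact ⟨j, Finset.mem_univ _, mul_pos (hμ j) (key j hj)⟩
  have hexp : ∑ j, μ j * (σ * (Q (u j) - Q (w j))) = σ * ∑ l ∈ Finset.range (s+1), q.coeff l / (l+1) *
      (∑ i, μ i * u i ^ (l+1) - ∑ i, μ i * w i ^ (l+1)) := by
    simp only [hQ, ← Finset.sum_sub_distrib, Finset.mul_sum]
    rw [Finset.sum_comm]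
    refine Finset.sum_congr rfl fun l _ => Finset.sum_congr rfl fun j _ => by ring
  rw [hexp] at hsum
  refine ⟨s, σ, i, ?_, hσ, hi, hch, ?_⟩
  · by_contra hlt
    rw [Finset.sum_eq_zero, mul_zero] at hsum
    · exact lt_irrefl _ hsum
    · intro l hl
      rw [hm l (by simp at hl; omega)]; simp
  · intro hs
    subst hs
    rw [Finset.sum_range_succ, Finset.sum_eq_zero, zero_add] at hsum
    · have hc : q.coeff s = (-1)^s := by rw [← hlc, leadingCoeff, hdeg]
      rw [hc] at hsum
      have hp : (0:ℝ) < s + 1 := by positivity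
      have := mul_pos hsum hp
      calc (0:ℝ) < _ := this
        _ = _ := by field_simp
    · intro l hl
      rw [hm l (by simpa using hl)]; simp

theorem vw_A2 (k : ℕ) (u w μ : Fin (k+1) → ℝ) (hu : Monotone u) (hw : Monotone w) (hne : u ≠ w)
    (hμ : ∀ i, 0 < μ i) (hm : ∀ j < k, ∑ i, μ i * u i ^ (j+1) = ∑ i, μ i * w i ^ (j+1)) :
    ∃ (σ : ℝ), (σ = 1 ∨ σ = -1) ∧
      (∀ l : Fin (k+1), 0 < σ * (-1)^(l:ℕ) * (u l - w l)) ∧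
      0 < σ * (-1)^k * (∑ i, μ i * u i ^ (k+1) - ∑ i, μ i * w i ^ (k+1)) := by
  obtain ⟨s, σ, i, hks, hσ, hi, hch, hfin⟩ := vw_A1 (k+1) k u w μ hu hw hne hμ hm
  have hs : s = k := by
    have := Fintype.card_le_of_injective i hi.injective
    simp at this; omega
  subst hs
  have hid : i = id := by
    funext l
    exact le_antisymm hi.apply_le hi.le_apply
  subst hid
  exact ⟨σ, hσ, hch, hfin rfl⟩
/-- weighted power sums are open at strictly increasing points. -/
theorem vw_open (m : ℕ) (μ u : Fin m → ℝ) (hμ : ∀ i, 0 < μ i) (hu : Function.Injective u) :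
    map (fun v : Fin m → ℝ => fun j : Fin m => ∑ i, μ i * v i ^ ((j:ℕ)+1)) (𝓝 u) =
      𝓝 (fun j : Fin m => ∑ i, μ i * u i ^ ((j:ℕ)+1)) := by
  let f' : (Fin m → ℝ) →L[ℝ] (Fin m → ℝ) := ContinuousLinearMap.pi fun j =>
    ∑ i, (μ i * (((j:ℕ)+1 : ℕ) * u i ^ (j:ℕ))) • (ContinuousLinearMap.proj i : (Fin m → ℝ) →L[ℝ] ℝ)
  have hf : HasStrictFDerivAt (fun v : Fin m → ℝ => fun j : Fin m => ∑ i, μ i * v i ^ ((j:ℕ)+1)) f' u := by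
    apply hasStrictFDerivAt_pi.2
    intro j
    apply HasStrictFDerivAt.fun_sum
    intro i _
    have h1 : HasStrictFDerivAt (fun v : Fin m → ℝ => v i) (ContinuousLinearMap.proj i : (Fin m → ℝ) →L[ℝ] ℝ) u :=
      (ContinuousLinearMap.proj i : (Fin m → ℝ) →L[ℝ] ℝ).hasStrictFDerivAt
    have h2 := (h1.pow ((j:ℕ)+1)).const_mul (μ i)
    refine h2.congr_fderiv ?_
    ext v
    simp
    try ring
  apply hf.map_nhds_eq_of_surj
  rw [LinearMap.range_eq_top]
  have hinj : Function.Injective (f' : (Fin m → ℝ) →ₗ[ℝ] (Fin m → ℝ)) := by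
    rw [← LinearMap.ker_eq_bot, LinearMap.ker_eq_bot']
    intro v hv
    have h3 : (fun i => μ i * v i) = 0 := by
      apply Matrix.eq_zero_of_forall_pow_sum_mul_pow_eq_zero hu
      intro j
      have := congrFun hv j
      simp [f'] at this
      have hp : ((j:ℕ):ℝ) + 1 ≠ 0 := by positivity
      apply mul_left_cancel₀ hp
      rw [mul_zero, ← this, Finset.mul_sum]
      refine Finset.sum_congr rfl fun i _ => by ring
    funext i
    have := congrFun h3 i
    simpa [(hμ i).ne'] using this
  exact LinearMap.injective_iff_surjective.1 hinj

theorem vw_psum_cont (m j : ℕ) (μ : Fin m → ℝ) : Continuous (fun v : Fin m → ℝ => ∑ i, μ i * v i ^ j) := by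
  fun_prop

theorem vw_mono_closed (m : ℕ) : IsClosed {v : Fin m → ℝ | Monotone v} := by
  have : {v : Fin m → ℝ | Monotone v} = ⋂ i, ⋂ j, ⋂ (_ : i ≤ j), {v | v i ≤ v j} := by
    ext v; simp [Monotone]
  rw [this]
  refine isClosed_iInter fun i => isClosed_iInter fun j => isClosed_iInter fun _ =>
    isClosed_le (continuous_apply i) (continuous_apply j)

/-- approximate version of the moving lemma -/
theorem vw_M0 (k : ℕ) (μ w v : Fin (k+1) → ℝ) (ε : ℝ) (hμ : ∀ i, 0 < μ i)
    (hv : StrictMono v) (hvw : v ∈ Metric.closedBall w ε)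
    (hodd : ∀ i j : Fin (k+1), (j:ℕ) = i + 1 → Odd (i:ℕ) → w i + 2 * ε < w j) :
    ∃ u : Fin (k+1) → ℝ, u ∈ Metric.sphere w ε ∧ Monotone u ∧
      (∀ j < k, ∑ i, μ i * u i ^ (j+1) = ∑ i, μ i * v i ^ (j+1)) ∧
      (-1)^(k+1) * ∑ i, μ i * v i ^ (k+1) ≤ (-1)^(k+1) * ∑ i, μ i * u i ^ (k+1) := by
  set K : Set (Fin (k+1) → ℝ) := {u | u ∈ Metric.closedBall w ε ∧ Monotone u ∧
    ∀ j < k, ∑ i, μ i * u i ^ (j+1) = ∑ i, μ i * v i ^ (j+1)} with hK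
  have hKc : IsCompact K := by
    apply (isCompact_closedBall w ε).inter_right (t := {u | Monotone u ∧
      ∀ j < k, ∑ i, μ i * u i ^ (j+1) = ∑ i, μ i * v i ^ (j+1)})
    apply (vw_mono_closed _).inter
    have : {u : Fin (k+1) → ℝ | ∀ j < k, ∑ i, μ i * u i ^ (j+1) = ∑ i, μ i * v i ^ (j+1)} =
      ⋂ j, ⋂ (_ : j < k), {u | ∑ i, μ i * u i ^ (j+1) = ∑ i, μ i * v i ^ (j+1)} := by ext; simp
    change IsClosed {u : Fin (k+1) → ℝ | ∀ j < k, ∑ i, μ i * u i ^ (j+1) = ∑ i, μ i * v i ^ (j+1)}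
    rw [this]
    exact isClosed_iInter fun j => isClosed_iInter fun _ =>
      isClosed_eq (vw_psum_cont _ _ _) continuous_const
  have hvK : v ∈ K := ⟨hvw, hv.monotone, fun _ _ => rfl⟩
  obtain ⟨u, huK, hmax⟩ := hKc.exists_isMaxOn ⟨v, hvK⟩
    (continuous_const.mul (vw_psum_cont (k+1) (k+1) μ) :
      Continuous fun u : Fin (k+1) → ℝ => (-1:ℝ)^(k+1) * ∑ i, μ i * u i ^ (k+1)).continuousOn
  have hmax' : ∀ u' ∈ K, (-1:ℝ)^(k+1) * ∑ i, μ i * u' i ^ (k+1) ≤ (-1:ℝ)^(k+1) * ∑ i, μ i * u i ^ (k+1) :=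
    fun u' h => hmax h
  refine ⟨u, ?_, huK.2.1, huK.2.2, hmax' v hvK⟩
  by_contra hns
  have hball : u ∈ Metric.ball w ε := by
    have h1 := huK.1
    rw [Metric.mem_closedBall] at h1
    rw [Metric.mem_sphere] at hns
    exact Metric.mem_ball.2 (lt_of_le_of_ne h1 hns)
  by_cases hst : StrictMono u
  · -- interior: contradiction by openness
    have hop := vw_open (k+1) μ u hμ hst.injective
    have hU : {u' : Fin (k+1) → ℝ | u' ∈ Metric.closedBall w ε ∧ Monotone u'} ∈ 𝓝 u := by
      have h1 : ∀ᶠ u' in 𝓝 u, u' ∈ Metric.ball w ε := Metric.isOpen_ball.mem_nhds hball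
      have h2 : ∀ᶠ u' in 𝓝 u, ∀ i j : Fin (k+1), i < j → u' i < u' j := by
        rw [eventually_all]; intro i
        rw [eventually_all]; intro j
        by_cases hij : i < j
        · have : ∀ᶠ u' in 𝓝 u, u' i < u' j :=
            (isOpen_lt (continuous_apply i) (continuous_apply j)).mem_nhds (hst hij)
          filter_upwards [this] with u' h _ using h
        · exact Eventually.of_forall fun _ h => absurd h hij
      filter_upwards [h1, h2] with u' h1 h2
      exact ⟨Metric.ball_subset_closedBall h1, StrictMono.monotone fun i j h => h2 i j h⟩
    have himg := image_mem_map (m := fun v : Fin (k+1) → ℝ => fun j : Fin (k+1) => ∑ i, μ i * v i ^ ((j:ℕ)+1)) hU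
    rw [hop] at himg
    set P := (fun j : Fin (k+1) => ∑ i, μ i * u i ^ ((j:ℕ)+1)) with hP
    have hct : Tendsto (fun δ : ℝ => Function.update P (Fin.last k) (P (Fin.last k) + (-1)^(k+1) * δ))
        (𝓝[>] 0) (𝓝 P) := by
      have hc : Continuous (fun δ : ℝ => Function.update P (Fin.last k) (P (Fin.last k) + (-1)^(k+1) * δ)) := by
        fun_prop
      have := hc.tendsto 0
      simp only [mul_zero, add_zero, Function.update_eq_self] at this
      exact this.mono_left nhdsWithin_le_nhds
    obtain ⟨δ, ⟨u', hu', he⟩, hδ⟩ := ((hct.eventually himg).and self_mem_nhdsWithin).exists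
    have hδ : (0:ℝ) < δ := hδ
    have hK' : u' ∈ K := by
      refine ⟨hu'.1, hu'.2, fun j hj => ?_⟩
      have h1 := congrFun he ⟨j, by omega⟩
      rw [Function.update_of_ne] at h1
      · simp only [hP] at h1
        rw [h1]; exact huK.2.2 j hj
      · intro h; have := congrArg Fin.val h; simp at this; omega
    have h1 := congrFun he (Fin.last k)
    simp only [Function.update_self, hP, Fin.val_last] at h1
    have h2 := hmax' u' hK'
    rw [h1, mul_add, ← mul_assoc, ← pow_add, Even.neg_one_pow ⟨k+1, rfl⟩] at h2
    linarith
  · -- collision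
    have hcol : ∃ i j : Fin (k+1), (j:ℕ) = i + 1 ∧ u i = u j := by
      by_contra hno
      apply hst
      rw [Fin.strictMono_iff_lt_succ]
      intro i
      refine lt_of_le_of_ne (huK.2.1 (Fin.castSucc_le_succ i)) fun h => hno ⟨i.castSucc, i.succ, by simp, h⟩
    obtain ⟨i, j, hij, huij⟩ := hcol
    have hlt : i < j := by rw [Fin.lt_def]; omega
    have hvij : v i < v j := hv hlt
    have heven : Even (i:ℕ) := by
      by_contra ho
      have h1 := hodd i j hij (Nat.not_even_iff_odd.1 ho)
      have hb := Metric.mem_ball.1 hball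
      have hi := (dist_le_pi_dist u w i).trans_lt hb
      have hj := (dist_le_pi_dist u w j).trans_lt hb
      rw [Real.dist_eq, abs_lt] at hi hj
      linarith [hi.1, hi.2, hj.1, hj.2]
    have hne : v ≠ u := by intro h; rw [h] at hvij; linarith
    obtain ⟨σ, hσ, hch, hfin⟩ := vw_A2 k v u μ hv.monotone huK.2.1 hne hμ (fun j hj => (huK.2.2 j hj).symm)
    rcases hσ with h | h
    · subst h
      have hi := hch i
      have hj := hch j
      rw [hij, pow_succ, heven.neg_one_pow] at hj
      rw [heven.neg_one_pow] at hi
      linarith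
    · subst h
      have := hmax' v hvK
      rw [pow_succ] at this
      linarith

theorem vw_M (k : ℕ) (μ w : Fin (k+1) → ℝ) (ε : ℝ) (hε : 0 < ε) (hμ : ∀ i, 0 < μ i) (hw : Monotone w)
    (hodd : ∀ i j : Fin (k+1), (j:ℕ) = i + 1 → Odd (i:ℕ) → w i + 2 * ε < w j) :
    ∃ u : Fin (k+1) → ℝ, u ∈ Metric.closedBall w ε ∧ Monotone u ∧
      (∀ j < k, ∑ i, μ i * u i ^ (j+1) = ∑ i, μ i * w i ^ (j+1)) ∧
      (∀ l : Fin (k+1), 0 < (-1)^((l:ℕ)+1) * (u l - w l)) ∧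
      (-1)^(k+1) * ∑ i, μ i * w i ^ (k+1) < (-1)^(k+1) * ∑ i, μ i * u i ^ (k+1) := by
  let v : ℕ → Fin (k+1) → ℝ := fun ν i => w i + (1 / ((ν:ℝ)+1)) * (ε / (k+1) * i)
  have hvs : ∀ ν, StrictMono (v ν) := by
    intro ν i j hij
    have h1 := hw hij.le
    have h2 : ((i:ℕ):ℝ) < ((j:ℕ):ℝ) := by exact_mod_cast hij
    have h3 : 0 < 1 / ((ν:ℝ)+1) := by positivity
    have h4 : 0 < ε / ((k:ℝ)+1) := by positivity
    have := mul_lt_mul_of_pos_left (mul_lt_mul_of_pos_left h2 h4) h3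
    simp only [v]; linarith
  have hvb : ∀ ν, v ν ∈ Metric.closedBall w ε := by
    intro ν
    rw [Metric.mem_closedBall, dist_pi_le_iff hε.le]
    intro i
    have h1 : ((i:ℕ):ℝ) ≤ k + 1 := by exact_mod_cast i.2.le
    have h3 : 1 / ((ν:ℝ)+1) ≤ 1 := by
      rw [div_le_one (by positivity)]; linarith [(Nat.cast_nonneg ν : (0:ℝ) ≤ ν)]
    have h4 : 0 ≤ ε / ((k:ℝ)+1) * i := by positivity
    have h5 : ε / ((k:ℝ)+1) * i ≤ ε := by
      calc ε / ((k:ℝ)+1) * i ≤ ε / ((k:ℝ)+1) * (k+1) := by gcongr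
        _ = ε := by field_simp
    simp only [v, Real.dist_eq, add_sub_cancel_left]
    rw [abs_of_nonneg (by positivity)]
    nlinarith
  have hvt : Tendsto v atTop (𝓝 w) := by
    rw [tendsto_pi_nhds]
    intro i
    have := (tendsto_one_div_add_atTop_nhds_zero_nat (𝕜 := ℝ)).mul_const (ε / (k+1) * (i:ℕ))
    have := this.const_add (w i)
    simpa [v] using this
  choose u hus hum hup huE using fun ν => vw_M0 k μ w (v ν) ε hμ (hvs ν) (hvb ν) hodd
  obtain ⟨u₀, hu₀, φ, hφ, hlim⟩ := (isCompact_sphere w ε).tendsto_subseq hus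
  have hvφ : Tendsto (v ∘ φ) atTop (𝓝 w) := hvt.comp hφ.tendsto_atTop
  have hmono : Monotone u₀ :=
    (vw_mono_closed _).mem_of_tendsto hlim (Eventually.of_forall fun ν => hum (φ ν))
  have hpow : ∀ j < k, ∑ i, μ i * u₀ i ^ (j+1) = ∑ i, μ i * w i ^ (j+1) := by
    intro j hj
    have h1 := ((vw_psum_cont _ (j+1) μ).tendsto u₀).comp hlim
    have h2 := ((vw_psum_cont _ (j+1) μ).tendsto w).comp hvφ
    refine tendsto_nhds_unique h1 (h2.congr fun ν => ?_)
    exact (hup (φ ν) j hj).symm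
  have hE : (-1)^(k+1) * ∑ i, μ i * w i ^ (k+1) ≤ (-1)^(k+1) * ∑ i, μ i * u₀ i ^ (k+1) := by
    have h1 := (((vw_psum_cont _ (k+1) μ).tendsto u₀).comp hlim).const_mul ((-1)^(k+1))
    have h2 := (((vw_psum_cont _ (k+1) μ).tendsto w).comp hvφ).const_mul ((-1)^(k+1))
    exact le_of_tendsto_of_tendsto' h2 h1 fun ν => huE (φ ν)
  have hne : u₀ ≠ w := by
    intro h; rw [h] at hu₀; simp at hu₀; linarith
  obtain ⟨σ, hσ, hch, hfin⟩ := vw_A2 k u₀ w μ hmono hw hne hμ hpow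
  refine ⟨u₀, Metric.sphere_subset_closedBall hu₀, hmono, hpow, ?_, ?_⟩
  · intro l
    have := hch l
    rcases hσ with h | h
    · subst h; rw [pow_succ] at hE; linarith
    · subst h; rw [pow_succ]; linarith
  · rcases hσ with h | h
    · subst h; rw [pow_succ] at hE; linarith
    · subst h; rw [pow_succ]; linarith

/-- Configurations of extremal type: at most `k` blocks, those with even label being singletons. -/
def vwT (n k : ℕ) : Set (Fin n → ℝ) :=
  {x | ∃ h : Fin n → Fin k, Monotone h ∧ (∀ i j, h i = h j → x i = x j) ∧
    (∀ i j, h i = h j → Even (h i : ℕ) → i = j)}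

theorem vwT_closed (n k : ℕ) : IsClosed (vwT n k) := by
  have : vwT n k = ⋃ h : Fin n → Fin k, {x | Monotone h ∧ (∀ i j, h i = h j → x i = x j) ∧
    (∀ i j, h i = h j → Even (h i : ℕ) → i = j)} := by ext; simp [vwT]
  rw [this]
  refine isClosed_iUnion_of_finite fun h => ?_
  apply isClosed_const.inter
  apply IsClosed.inter _ isClosed_const
  have : {x : Fin n → ℝ | ∀ i j, h i = h j → x i = x j} =
      ⋂ i, ⋂ j, ⋂ (_ : h i = h j), {x | x i = x j} := by ext; simp
  change IsClosed {x : Fin n → ℝ | ∀ i j, h i = h j → x i = x j}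
  rw [this]
  exact isClosed_iInter fun i => isClosed_iInter fun j => isClosed_iInter fun _ =>
    isClosed_eq (continuous_apply i) (continuous_apply j)

theorem vwT_max (n k : ℕ) (x y : Fin n → ℝ) (hx : Monotone x) (hy : Monotone y) (hT : x ∈ vwT n k)
    (hm : ∀ j < k, ∑ i, y i ^ (j+1) = ∑ i, x i ^ (j+1)) (hne : y ≠ x) :
    (-1)^(k+1) * ∑ i, y i ^ (k+1) < (-1)^(k+1) * ∑ i, x i ^ (k+1) := by
  obtain ⟨h, hh, hconst, hsing⟩ := hT
  obtain ⟨s, σ, i, hks, hσ, hi, hch, hfin⟩ := vw_A1 n k y x (fun _ => 1) hy hx hne (fun _ => one_pos)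
    (by simpa using hm)
  -- labels
  let g : Fin n → ℕ := fun a => if (Even (h a : ℕ) ↔ 0 < y a - x a) then (h a : ℕ) else h a + 1
  have hg1 : ∀ a, g a ≤ h a + 1 := by intro a; simp only [g]; split_ifs <;> omega
  have hg0 : ∀ a, (h a : ℕ) ≤ g a := by intro a; simp only [g]; split_ifs <;> omega
  have hgp : ∀ a, (Even (g a) ↔ 0 < y a - x a) := by
    intro a; simp only [g]; split_ifs with hc
    · exact hc
    · rw [Nat.even_add_one]; tauto
  have hsg : ∀ l : Fin (s+1), (0 < y (i l) - x (i l) ↔ 0 < σ * (-1)^(l:ℕ)) := by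
    intro l
    have := hch l
    constructor
    · intro h1; exact pos_of_mul_pos_left this h1.le
    · intro h1; exact pos_of_mul_pos_right this h1.le
  have hgl : ∀ l l' : Fin (s+1), (l':ℕ) = l + 1 → g (i l) < g (i l') := by
    intro l l' hl
    have hlt : i l < i l' := hi (by rw [Fin.lt_def]; omega)
    have hpar : (0 < y (i l') - x (i l')) ↔ ¬ (0 < y (i l) - x (i l)) := by
      rw [hsg, hsg, hl, pow_succ]
      have hne' : σ * (-1)^(l:ℕ) ≠ 0 := by
        intro h0; have := hch l; rw [h0] at this; simp at this
      constructor
      · intro h1; linarith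
      · intro h1; have := lt_of_le_of_ne (not_lt.1 h1) hne'; linarith
    have hgne : g (i l) ≠ g (i l') := by
      intro he
      have h1 := hgp (i l); have h2 := hgp (i l')
      rw [he] at h1; tauto
    have hle : h (i l) ≤ h (i l') := hh hlt.le
    rcases hle.lt_or_eq with h1 | h1
    · have := hg1 (i l); have := hg0 (i l')
      have h1' : (h (i l) : ℕ) < h (i l') := h1
      omega
    · have hodd : ¬ Even (h (i l) : ℕ) := fun he => hlt.ne (hsing _ _ h1 he)
      have hxe := hconst _ _ h1
      have hye := hy hlt.le
      have hno : ¬ (0 < y (i l) - x (i l)) := by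
        intro hp
        have : 0 < y (i l') - x (i l') := by linarith
        tauto
      have hyes := hpar.2 hno
      have e1 : g (i l) = h (i l) := by simp only [g]; rw [if_pos]; tauto
      have e2 : g (i l') = h (i l') + 1 := by
        simp only [g]; rw [if_neg]; rw [← h1]; tauto
      rw [e1, e2, h1]; omega
  have hge : ∀ (m : ℕ) (hms : m < s+1), g (i 0) + m ≤ g (i ⟨m, hms⟩) := by
    intro m
    induction m with
    | zero => intro _; exact le_rfl
    | succ m ih =>
      intro hms
      have := ih (by omega)
      have := hgl ⟨m, by omega⟩ ⟨m+1, hms⟩ rfl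
      omega
  have h1 := hge s (by omega)
  have h2 := hg1 (i ⟨s, by omega⟩)
  have h3 := (h (i ⟨s, by omega⟩)).2
  have hsk : s = k := by omega
  have hg00 : g (i 0) = 0 := by omega
  have h4 := hgp (i 0)
  rw [hg00] at h4
  have h5 := (hsg 0).1 (h4.1 (by decide))
  have hσ1 : σ = 1 := by
    rcases hσ with h | h
    · exact h
    · subst h; simp at h5; linarith
  have h6 := hfin hsk
  rw [hσ1] at h6
  simp only [one_mul] at h6
  rw [pow_succ]; linarith

/-- greedy labels -/
noncomputable def vwL (Y : ℕ → ℝ) : ℕ → ℕ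
  | 0 => 0
  | p+1 => open Classical in if Odd (vwL Y p) ∧ Y (p+1) = Y p then vwL Y p else vwL Y p + 1

theorem vwL_succ (Y : ℕ → ℝ) (p : ℕ) : 
    (Odd (vwL Y p) ∧ Y (p+1) = Y p ∧ vwL Y (p+1) = vwL Y p) ∨
    (¬ (Odd (vwL Y p) ∧ Y (p+1) = Y p) ∧ vwL Y (p+1) = vwL Y p + 1) := by
  by_cases h : Odd (vwL Y p) ∧ Y (p+1) = Y p
  · left; exact ⟨h.1, h.2, by rw [vwL, if_pos h]⟩
  · right; exact ⟨h, by rw [vwL, if_neg h]⟩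

theorem vwL_mono (Y : ℕ → ℝ) : Monotone (vwL Y) := by
  apply monotone_nat_of_le_succ
  intro p
  rcases vwL_succ Y p with h | h <;> omega

theorem vwL_eq (Y : ℕ → ℝ) (p q : ℕ) (hpq : p < q) (h : vwL Y p = vwL Y q) :
    Odd (vwL Y p) ∧ Y p = Y q := by
  obtain ⟨m, rfl⟩ := Nat.exists_eq_add_of_lt hpq
  clear hpq
  induction m with
  | zero =>
    rcases vwL_succ Y p with h1 | h1
    · exact ⟨h1.1, h1.2.1.symm⟩
    · simp only [add_zero] at h; omega
  | succ m ih =>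
    have h1 := vwL_mono Y (show p ≤ p + m + 1 by omega)
    rcases vwL_succ Y (p + m + 1) with h2 | h2
    · have := ih (h.trans h2.2.2)
      exact ⟨this.1, this.2.trans h2.2.1.symm⟩
    · have h3 := h.trans h2.2
      omega

theorem vwL_ivt (Y : ℕ → ℝ) (p m : ℕ) (h : m ≤ vwL Y p) : 
    ∃ q ≤ p, vwL Y q = m ∧ ∀ r < q, vwL Y r < m := by
  have hex : ∃ q, m ≤ vwL Y q := ⟨p, h⟩
  classical
  refine ⟨Nat.find hex, Nat.find_min' hex h, ?_, fun r hr => not_le.1 (Nat.find_min hex hr)⟩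
  have h1 := Nat.find_spec hex
  rcases hq : Nat.find hex with _ | q
  · rw [hq] at h1; simp [vwL] at h1 ⊢; omega
  · rw [hq] at h1
    have h2 := Nat.find_min hex (show q < Nat.find hex by omega)
    rcases vwL_succ Y q with h3 | h3 <;> omega

/-- values jump strictly after an odd label -/
theorem vwL_jump (n : ℕ) (Y : ℕ → ℝ) (hY : ∀ p q, p ≤ q → q < n → Y p ≤ Y q) (p q : ℕ) (hq : q < n)
    (hodd : Odd (vwL Y p)) (h : vwL Y p < vwL Y q) : Y p < Y q := by
  obtain ⟨r, hrq, hr, hmin⟩ := vwL_ivt Y q (vwL Y p + 1) h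
  have hr0 : r ≠ 0 := by rintro rfl; simp [vwL] at hr
  obtain ⟨r, rfl⟩ := Nat.exists_eq_succ_of_ne_zero hr0
  have h1 := hmin r (Nat.lt_succ_self r)
  have hpr : p < r + 1 := by
    by_contra hge
    have := vwL_mono Y (not_lt.1 hge)
    simp only [Nat.succ_eq_add_one] at *
    omega
  have h2 := vwL_mono Y (show p ≤ r by omega)
  have hr' : vwL Y r = vwL Y p := by omega
  simp only [Nat.succ_eq_add_one] at *
  rcases vwL_succ Y r with h3 | h3
  · omega
  · have h4 : Y (r+1) ≠ Y r := fun h5 => h3.1 ⟨hr' ▸ hodd, h5⟩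
    have h5 := hY p r (by omega) (by omega)
    have h6 := hY r (r+1) (by omega) (by omega)
    have h7 := hY (r+1) q hrq hq
    have := lt_of_le_of_ne h6 h4.symm
    linarith

theorem vw_notT (n k : ℕ) (y : Fin n → ℝ) (hy : Monotone y) (hT : y ∉ vwT n k) (ε : ℝ) (hε : 0 < ε) :
    ∃ y' : Fin n → ℝ, Monotone y' ∧ dist y' y ≤ ε ∧ (∀ j < k, ∑ i, y' i ^ (j+1) = ∑ i, y i ^ (j+1)) ∧
      (-1)^(k+1) * ∑ i, y i ^ (k+1) < (-1)^(k+1) * ∑ i, y' i ^ (k+1) := by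
  classical
  let Y : ℕ → ℝ := fun p => if h : p < n then y ⟨p, h⟩ else 0
  have hYy : ∀ p : Fin n, Y p = y p := by intro p; simp [Y]
  have hY : ∀ p q, p ≤ q → q < n → Y p ≤ Y q := by
    intro p q hpq hq
    have hp : p < n := by omega
    simp only [Y, hp, hq, dif_pos]; exact hy hpq
  let L : Fin n → ℕ := fun p => vwL Y p
  have hLm : Monotone L := fun p q h => vwL_mono Y h
  have hLlt : ∀ {p q}, L p < L q → p < q := fun {p q} h => by
    by_contra hh; exact absurd (hLm (not_lt.1 hh)) (by omega)
  have hLeq : ∀ p q, L p = L q → y p = y q := by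
    intro p q h
    rcases lt_trichotomy p q with h1 | h1 | h1
    · have := (vwL_eq Y p q h1 h).2; rwa [hYy, hYy] at this
    · rw [h1]
    · have := (vwL_eq Y q p h1 h.symm).2; rw [hYy, hYy] at this; exact this.symm
  have hjump : ∀ p q, Odd (L p) → L p < L q → y p < y q := by
    intro p q h1 h2
    have := vwL_jump n Y hY p q q.2 h1 h2
    rwa [hYy, hYy] at this
  have hbig : ∃ p, k ≤ L p := by
    by_contra hno
    push Not at hno
    apply hT
    refine ⟨fun p => ⟨L p, hno p⟩, fun p q h => hLm h, ?_, ?_⟩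
    · intro p q h; exact hLeq p q (congrArg Fin.val h)
    · intro p q h he
      have h' : L p = L q := congrArg Fin.val h
      have he' : Even (L p) := he
      rcases lt_trichotomy p q with h1 | h1 | h1
      · exact absurd he' (Nat.not_even_iff_odd.2 (vwL_eq Y p q h1 h').1)
      · exact h1
      · have := (vwL_eq Y q p h1 h'.symm).1
        have h2 : Odd (L p) := by rw [h']; exact this
        exact absurd he' (Nat.not_even_iff_odd.2 h2)
  obtain ⟨p₀, hp₀⟩ := hbig
  have hrep : ∀ i : Fin (k+1), ∃ p : Fin n, L p = i := by
    intro i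
    obtain ⟨q, hq, hqi, -⟩ := vwL_ivt Y p₀ i (le_trans (by omega) hp₀)
    exact ⟨⟨q, by omega⟩, hqi⟩
  choose r hr using hrep
  let w : Fin (k+1) → ℝ := fun i => y (r i)
  have hw : Monotone w := by
    intro i j hij
    rcases hij.lt_or_eq with h | h
    · exact hy (hLlt (by rw [hr, hr]; exact h)).le
    · rw [h]
  let μ : Fin (k+1) → ℝ := fun i => ((Finset.univ.filter fun p : Fin n => L p = i).card : ℝ)
  have hμ : ∀ i, 0 < μ i := by
    intro i
    simp only [μ]
    exact_mod_cast Finset.card_pos.2 ⟨r i, by simp [hr]⟩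
  -- choose the size of the motion
  have hev : ∀ᶠ δ : ℝ in 𝓝[>] 0, ∀ p q : Fin n, Odd (L p) → L p < L q → y p + 2 * δ < y q := by
    rw [eventually_all]; intro p
    rw [eventually_all]; intro q
    by_cases h : Odd (L p) ∧ L p < L q
    · have h1 := hjump p q h.1 h.2
      have : Tendsto (fun δ : ℝ => y p + 2 * δ) (𝓝[>] 0) (𝓝 (y p)) := by
        have hc : Continuous (fun δ : ℝ => y p + 2 * δ) := by fun_prop
        have := hc.tendsto 0
        simp only [mul_zero, add_zero] at this
        exact this.mono_left nhdsWithin_le_nhds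
      filter_upwards [this.eventually_lt_const h1] with δ hδ _ _ using hδ
    · exact Eventually.of_forall fun δ h1 h2 => absurd ⟨h1, h2⟩ h
  have hev2 : ∀ᶠ δ : ℝ in 𝓝[>] 0, δ < ε := 
    (tendsto_id.mono_left nhdsWithin_le_nhds : Tendsto id (𝓝[>] (0:ℝ)) (𝓝 0)).eventually_lt_const hε
  obtain ⟨δ, ⟨hδ1, hδ2⟩, hδ0⟩ := ((hev.and hev2).and self_mem_nhdsWithin).exists
  have hδ0 : (0:ℝ) < δ := hδ0
  obtain ⟨u, hub, hum, hup, hus, huE⟩ := vw_M k μ w δ hδ0 hμ hw (by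
    intro i j hij hi
    apply hδ1
    · rw [hr]; exact hi
    · rw [hr, hr, hij]; omega)
  have hub' : ∀ i, |u i - w i| ≤ δ := by
    intro i
    have := (dist_le_pi_dist u w i).trans (Metric.mem_closedBall.1 hub)
    rwa [Real.dist_eq] at this
  let y' : Fin n → ℝ := fun p => if h : L p < k+1 then u ⟨L p, h⟩ else y p
  have hwL : ∀ p (h : L p < k+1), w ⟨L p, h⟩ = y p := by
    intro p h; exact hLeq _ _ (by rw [hr])
  have hsum : ∀ j : ℕ, ∑ p, y' p ^ j - ∑ p, y p ^ j = ∑ i, μ i * u i ^ j - ∑ i, μ i * w i ^ j := by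
    intro j
    rw [← Finset.sum_sub_distrib, ← Finset.sum_sub_distrib]
    have h1 : ∀ p, y' p ^ j - y p ^ j = ∑ i : Fin (k+1), if L p = i then u i ^ j - w i ^ j else 0 := by
      intro p
      by_cases h : L p < k+1
      · rw [Finset.sum_eq_single (⟨L p, h⟩ : Fin (k+1))]
        · simp only [y', dif_pos h, if_true, hwL]
        · intro b _ hb
          rw [if_neg]; intro h2; apply hb; ext; exact h2.symm
        · simp
      · rw [Finset.sum_eq_zero]
        · simp only [y', dif_neg h, sub_self]
        · intro b _; rw [if_neg]; intro h2; omega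
    simp_rw [h1]
    rw [Finset.sum_comm]
    refine Finset.sum_congr rfl fun i _ => ?_
    rw [← Finset.sum_filter, Finset.sum_const, nsmul_eq_mul, mul_sub]
  refine ⟨y', ?_, ?_, ?_, ?_⟩
  · intro p q hpq
    have hL := hLm hpq
    by_cases hq : L q < k+1
    · have hp : L p < k+1 := by omega
      simp only [y', dif_pos hp, dif_pos hq]
      exact hum hL
    · by_cases hp : L p < k+1
      · simp only [y', dif_pos hp, dif_neg hq]
        have h1 : u ⟨L p, hp⟩ ≤ u (Fin.last k) := hum (Fin.le_last _)
        have hlast : L (r (Fin.last k)) = k := by rw [hr]; simp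
        rcases Nat.even_or_odd k with hk | hk
        · have h2 := hus (Fin.last k)
          rw [Fin.val_last, pow_succ, hk.neg_one_pow] at h2
          have h3 : w (Fin.last k) ≤ y q := hy (hLlt (by omega)).le
          linarith
        · have h2 := hδ1 (r (Fin.last k)) q (by rwa [hlast]) (by omega)
          have h3 := (abs_le.1 (hub' (Fin.last k))).2
          simp only [w] at h3
          linarith
      · simp only [y', dif_neg hp, dif_neg hq]; exact hy hpq
  · rw [dist_pi_le_iff hε.le]
    intro p
    rw [Real.dist_eq]
    by_cases h : L p < k+1
    · simp only [y', dif_pos h]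
      rw [← hwL p h]
      exact (hub' _).trans hδ2.le
    · simp only [y', dif_neg h, sub_self, abs_zero]; exact hε.le
  · intro j hj
    have := hsum (j+1)
    rw [hup j hj] at this; linarith
  · have := hsum (k+1)
    have h2 : (-1:ℝ)^(k+1) * (∑ p, y' p ^ (k+1) - ∑ p, y p ^ (k+1)) = 
      (-1)^(k+1) * (∑ i, μ i * u i ^ (k+1) - ∑ i, μ i * w i ^ (k+1)) := by rw [this]
    linarith

/-- power sum -/
noncomputable def vwp {n : ℕ} (j : ℕ) (x : Fin n → ℝ) : ℝ := ∑ i, x i ^ (j+1)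

theorem vwp_cont {n : ℕ} (j : ℕ) : Continuous (vwp j : (Fin n → ℝ) → ℝ) := by
  unfold vwp; fun_prop

/-- fibre of the first `k` power sums in the Weyl chamber -/
def vwF (n k : ℕ) (x : Fin n → ℝ) : Set (Fin n → ℝ) :=
  {z | Monotone z ∧ ∀ j < k, vwp j z = vwp j x}

theorem vwF_closed (n k : ℕ) (x : Fin n → ℝ) : IsClosed (vwF n k x) := by
  apply (vw_mono_closed n).inter
  have : {z : Fin n → ℝ | ∀ j < k, vwp j z = vwp j x} =
      ⋂ j, ⋂ (_ : j < k), {z | vwp j z = vwp j x} := by ext; simp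
  change IsClosed {z : Fin n → ℝ | ∀ j < k, vwp j z = vwp j x}
  rw [this]
  exact isClosed_iInter fun j => isClosed_iInter fun _ => isClosed_eq (vwp_cont j) continuous_const

theorem vwF_compact (n k : ℕ) (hk : 2 ≤ k) (x : Fin n → ℝ) : IsCompact (vwF n k x) := by
  apply Metric.isCompact_of_isClosed_isBounded (vwF_closed n k x)
  apply (Metric.isBounded_closedBall (x := (0 : Fin n → ℝ)) (r := vwp 1 x + 1)).subset
  intro z hz
  have h1 := hz.2 1 (by omega)
  have h0 : 0 ≤ vwp 1 x := by
    unfold vwp; exact Finset.sum_nonneg fun i _ => sq_nonneg (x i)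
  rw [Metric.mem_closedBall, dist_pi_le_iff (by linarith)]
  intro i
  have h2 : z i ^ 2 ≤ vwp 1 z := by
    unfold vwp
    exact Finset.single_le_sum (f := fun i => z i ^ (1+1)) (fun i _ => sq_nonneg (z i)) (Finset.mem_univ i)
  rw [Real.dist_eq]
  simp only [Pi.zero_apply, sub_zero]
  rw [abs_le]
  constructor <;> nlinarith

theorem vw_G (n k : ℕ) (hk : 2 ≤ k) (x : Fin n → ℝ) (hx : Monotone x) (c : ℝ)
    (hc : (-1)^(k+1) * vwp k x ≤ c) :
    ∃ z ∈ vwF n k x, (-1)^(k+1) * vwp k z ≤ c ∧ ((-1)^(k+1) * vwp k z = c ∨ z ∈ vwT n k) := by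
  have hEc : Continuous fun z : Fin n → ℝ => (-1:ℝ)^(k+1) * vwp k z := continuous_const.mul (vwp_cont k)
  have hcomp : IsCompact (vwF n k x ∩ {z | (-1)^(k+1) * vwp k z ≤ c}) :=
    (vwF_compact n k hk x).inter_right (isClosed_le hEc continuous_const)
  obtain ⟨z, hz, hmax⟩ := hcomp.exists_isMaxOn ⟨x, ⟨hx, fun _ _ => rfl⟩, hc⟩ hEc.continuousOn
  refine ⟨z, hz.1, hz.2, ?_⟩
  by_contra hno
  push Not at hno
  have hlt : (-1)^(k+1) * vwp k z < c := lt_of_le_of_ne hz.2 hno.1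
  have hnb : {z' : Fin n → ℝ | (-1)^(k+1) * vwp k z' < c} ∈ 𝓝 z :=
    (isOpen_lt hEc continuous_const).mem_nhds hlt
  obtain ⟨ε, hε, hball⟩ := Metric.nhds_basis_closedBall.mem_iff.1 hnb
  obtain ⟨y, hy, hd, hp, hE⟩ := vw_notT n k z hz.1.1 hno.2 ε hε
  have hyc : (-1)^(k+1) * vwp k y < c := hball (Metric.mem_closedBall.2 hd)
  have := hmax (show y ∈ vwF n k x ∩ {z | (-1)^(k+1) * vwp k z ≤ c} from
    ⟨⟨hy, fun j hj => (hp j hj).trans (hz.1.2 j hj)⟩, hyc.le⟩)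
  exact absurd hE (not_lt.2 this)

theorem vw_existsT (n k : ℕ) (hk : 2 ≤ k) (x : Fin n → ℝ) (hx : Monotone x) :
    ∃ z ∈ vwF n k x, z ∈ vwT n k := by
  have hEc : Continuous fun z : Fin n → ℝ => (-1:ℝ)^(k+1) * vwp k z := continuous_const.mul (vwp_cont k)
  have hxF : x ∈ vwF n k x := ⟨hx, fun _ _ => rfl⟩
  obtain ⟨m, hm, hmax⟩ := (vwF_compact n k hk x).exists_isMaxOn ⟨x, hxF⟩ hEc.continuousOn
  have h1 : ∀ z ∈ vwF n k x, (-1:ℝ)^(k+1) * vwp k z ≤ (-1:ℝ)^(k+1) * vwp k m := fun z hz => hmax hz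
  obtain ⟨z, hz, hzc, h⟩ := vw_G n k hk x hx ((-1:ℝ)^(k+1) * vwp k m + 1) (by linarith [h1 x hxF])
  refine ⟨z, hz, ?_⟩
  rcases h with h | h
  · have := h1 z hz; linarith
  · exact h

theorem vw_uniqT (n k : ℕ) (x y : Fin n → ℝ) (hx : Monotone x) (hy : y ∈ vwF n k x)
    (hxT : x ∈ vwT n k) (hyT : y ∈ vwT n k) : y = x := by
  by_contra hne
  have h1 := vwT_max n k x y hx hy.1 hxT hy.2 hne
  have h2 := vwT_max n k y x hy.1 hx hyT (fun j hj => (hy.2 j hj).symm) (Ne.symm hne)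
  linarith

theorem vw_between (n k : ℕ) (hk : 2 ≤ k) (x y : Fin n → ℝ) (hx : Monotone x) (hy : y ∈ vwF n k x)
    (hyT : y ∈ vwT n k) (τ : ℝ) (h0 : 0 ≤ τ) (h1 : τ ≤ 1) :
    ∃ z ∈ vwF n k x, vwp k z = (1 - τ) * vwp k y + τ * vwp k x := by
  by_cases hxy : x = y
  · exact ⟨x, ⟨hx, fun _ _ => rfl⟩, by rw [← hxy]; ring⟩
  have hlt : (-1)^(k+1) * vwp k x < (-1)^(k+1) * vwp k y :=
    vwT_max n k y x hy.1 hx hyT (fun j hj => (hy.2 j hj).symm) hxy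
  obtain ⟨z, hz, hzc, h⟩ := vw_G n k hk x hx
    ((-1)^(k+1) * ((1 - τ) * vwp k y + τ * vwp k x)) (by nlinarith)
  have hs : ((-1:ℝ)^(k+1)) ≠ 0 := by positivity
  rcases h with h | h
  · exact ⟨z, hz, mul_left_cancel₀ hs h⟩
  · have hzy : z = y := vw_uniqT n k y z hy.1 ⟨hz.1, fun j hj => (hz.2 j hj).trans (hy.2 j hj).symm⟩ hyT h
    refine ⟨z, hz, mul_left_cancel₀ hs ?_⟩
    apply le_antisymm hzc
    rw [hzy]; nlinarith

/-- truncated power sum vector -/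
noncomputable def vwPhi {n : ℕ} (k : ℕ) (x : Fin n → ℝ) : ℕ → ℝ := fun j => if j < k then vwp j x else 0

theorem vwPhi_cont {n : ℕ} (k : ℕ) : Continuous (vwPhi k : (Fin n → ℝ) → ℕ → ℝ) := by
  apply continuous_pi
  intro j
  unfold vwPhi
  split_ifs
  · exact vwp_cont j
  · exact continuous_const

theorem vwPhi_eq_iff {n : ℕ} (k : ℕ) (x y : Fin n → ℝ) :
    vwPhi k x = vwPhi k y ↔ ∀ j < k, vwp j x = vwp j y := by
  constructor
  · intro h j hj
    have := congrFun h j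
    simpa [vwPhi, hj] using this
  · intro h; funext j
    simp only [vwPhi]; split_ifs with hj
    · exact h j hj
    · rfl

theorem vwPhi_succ {n : ℕ} (k : ℕ) (x : Fin n → ℝ) :
    vwPhi (k+1) x = Function.update (vwPhi k x) k (vwp k x) := by
  funext j
  by_cases hj : j = k
  · subst hj; simp [vwPhi]
  · rw [Function.update_of_ne hj]; simp only [vwPhi]
    have : j < k + 1 ↔ j < k := by omega
    simp only [this]

theorem vwPhi_trunc {n : ℕ} (k : ℕ) (x : Fin n → ℝ) :
    Function.update (vwPhi (k+1) x) k 0 = vwPhi k x := by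
  rw [vwPhi_succ, Function.update_idem]
  apply Function.update_eq_self_iff.2
  simp [vwPhi]

/-- continuous bijection from a compact set onto its image -/
noncomputable def vwHomeo {A B : Type*} [TopologicalSpace A] [TopologicalSpace B] [T2Space B] (f : A → B)
    (X : Set A) (Z : Set B) (hX : IsCompact X) (hf : Continuous f) (hb : Set.BijOn f X Z) : X ≃ₜ Z :=
  haveI : CompactSpace X := isCompact_iff_compactSpace.1 hX
  Continuous.homeoOfEquivCompactToT2 (f := hb.equiv f)
    (Continuous.subtype_mk (hf.comp continuous_subtype_val) _)

theorem vwHomeo_apply {A B : Type*} [TopologicalSpace A] [TopologicalSpace B] [T2Space B] (f : A → B)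
    (X : Set A) (Z : Set B) (hX : IsCompact X) (hf : Continuous f) (hb : Set.BijOn f X Z) (x : X) :
    ((vwHomeo f X Z hX hf hb x : Z) : B) = f x := rfl

theorem vw_step (n d k : ℕ) (hd : 2 ≤ d) (hdk : d ≤ k) (x₀ : Fin n → ℝ)
    (ih : ContractibleSpace (vwPhi k '' vwF n d x₀)) :
    ContractibleSpace (vwPhi (k+1) '' vwF n d x₀) := by
  have hk : 2 ≤ k := hd.trans hdk
  have hsub : ∀ x ∈ vwF n d x₀, ∀ z ∈ vwF n k x, z ∈ vwF n d x₀ := fun x hx z hz =>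
    ⟨hz.1, fun j hj => (hz.2 j (by omega)).trans (hx.2 j hj)⟩
  have hb : Set.BijOn (vwPhi k) (vwF n d x₀ ∩ vwT n k) (vwPhi k '' vwF n d x₀) := by
    refine ⟨fun x hx => ⟨x, hx.1, rfl⟩, ?_, ?_⟩
    · intro x hx y hy h
      exact vw_uniqT n k y x hy.1.1 ⟨hx.1.1, (vwPhi_eq_iff k x y).1 h⟩ hy.2 hx.2
    · rintro _ ⟨x, hx, rfl⟩
      obtain ⟨z, hz, hzT⟩ := vw_existsT n k hk x hx.1
      exact ⟨z, ⟨hsub x hx z hz, hzT⟩, (vwPhi_eq_iff k z x).2 hz.2⟩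
  let e := vwHomeo (vwPhi k) _ _ ((vwF_compact n d hd x₀).inter_right (vwT_closed n k)) (vwPhi_cont k) hb
  have he : ∀ t, vwPhi k (e.symm t : Fin n → ℝ) = t := by
    intro t
    have := vwHomeo_apply (vwPhi k) _ _ ((vwF_compact n d hd x₀).inter_right (vwT_closed n k)) (vwPhi_cont k) hb (e.symm t)
    rw [← this]
    exact congrArg Subtype.val (e.apply_symm_apply t)
  have hscont : Continuous fun t => vwp k (e.symm t : Fin n → ℝ) :=
    (vwp_cont k).comp (continuous_subtype_val.comp e.symm.continuous)
  have hfm : ∀ t : (vwPhi (k+1) '' vwF n d x₀ : Set (ℕ → ℝ)),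
      Function.update (t : ℕ → ℝ) k 0 ∈ vwPhi k '' vwF n d x₀ := by
    rintro ⟨_, x, hx, rfl⟩
    exact ⟨x, hx, (vwPhi_trunc k x).symm⟩
  have hgm : ∀ t : (vwPhi k '' vwF n d x₀ : Set (ℕ → ℝ)),
      Function.update (t : ℕ → ℝ) k (vwp k (e.symm t : Fin n → ℝ)) ∈ vwPhi (k+1) '' vwF n d x₀ := by
    intro t
    exact ⟨e.symm t, (e.symm t).2.1, by rw [vwPhi_succ, he]⟩
  let f : C(vwPhi (k+1) '' vwF n d x₀, vwPhi k '' vwF n d x₀) :=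
    ⟨fun t => ⟨Function.update (t : ℕ → ℝ) k 0, hfm t⟩,
     Continuous.subtype_mk (continuous_subtype_val.update k continuous_const) hfm⟩
  let g : C(vwPhi k '' vwF n d x₀, vwPhi (k+1) '' vwF n d x₀) :=
    ⟨fun t => ⟨Function.update (t : ℕ → ℝ) k (vwp k (e.symm t : Fin n → ℝ)), hgm t⟩,
     Continuous.subtype_mk (continuous_subtype_val.update k hscont) hgm⟩
  have hfg : f.comp g = ContinuousMap.id _ := by
    ext1 t
    apply Subtype.ext
    change Function.update (Function.update (t : ℕ → ℝ) k _) k 0 = (t : ℕ → ℝ)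
    rw [Function.update_idem, Function.update_eq_self_iff]
    rw [← he t]; simp [vwPhi]
  have hHm : ∀ p : unitInterval × (vwPhi (k+1) '' vwF n d x₀ : Set (ℕ → ℝ)),
      Function.update (p.2 : ℕ → ℝ) k
        ((1 - (p.1:ℝ)) * vwp k (e.symm (f p.2) : Fin n → ℝ) + (p.1:ℝ) * (p.2 : ℕ → ℝ) k) ∈
        vwPhi (k+1) '' vwF n d x₀ := by
    rintro ⟨τ, t⟩
    obtain ⟨x, hx, hxt⟩ := t.2
    have h1 : ((f t : vwPhi k '' vwF n d x₀) : ℕ → ℝ) = vwPhi k x := by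
      change Function.update (t : ℕ → ℝ) k 0 = _
      rw [← hxt, vwPhi_trunc]
    have h2 := he (f t)
    rw [h1] at h2
    obtain ⟨z, hz, hzp⟩ := vw_between n k hk x (e.symm (f t)) hx.1
      ⟨(e.symm (f t)).2.1.1, (vwPhi_eq_iff k _ _).1 h2⟩ (e.symm (f t)).2.2 τ τ.2.1 τ.2.2
    refine ⟨z, hsub x hx z hz, ?_⟩
    have h3 : (t : ℕ → ℝ) k = vwp k x := by rw [← hxt, vwPhi_succ, Function.update_self]
    simp only [h3]
    rw [vwPhi_succ, hzp, (vwPhi_eq_iff k z x).2 hz.2, ← hxt, vwPhi_succ, Function.update_idem]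
  let H : ContinuousMap.Homotopy (g.comp f) (ContinuousMap.id _) :=
    { toFun := fun p => ⟨Function.update (p.2 : ℕ → ℝ) k
        ((1 - (p.1:ℝ)) * vwp k (e.symm (f p.2) : Fin n → ℝ) + (p.1:ℝ) * (p.2 : ℕ → ℝ) k), hHm p⟩
      continuous_toFun := by
        refine Continuous.subtype_mk ?_ hHm
        apply Continuous.update
        · exact continuous_subtype_val.comp continuous_snd
        · have h1 : Continuous fun p : unitInterval × (vwPhi (k+1) '' vwF n d x₀) =>
            vwp k (e.symm (f p.2) : Fin n → ℝ) := hscont.comp (f.continuous.comp continuous_snd)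
          have h2 : Continuous fun p : unitInterval × (vwPhi (k+1) '' vwF n d x₀) =>
            (p.1 : ℝ) := continuous_subtype_val.comp continuous_fst
          have h3 : Continuous fun p : unitInterval × (vwPhi (k+1) '' vwF n d x₀) =>
            (p.2 : ℕ → ℝ) k := (continuous_apply k).comp (continuous_subtype_val.comp continuous_snd)
          exact ((continuous_const.sub h2).mul h1).add (h2.mul h3)
      map_zero_left := by
        intro t
        apply Subtype.ext
        change Function.update (t : ℕ → ℝ) k _ = Function.update (Function.update (t : ℕ → ℝ) k 0) k _
        rw [Function.update_idem]
        simp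
      map_one_left := by
        intro t
        apply Subtype.ext
        change Function.update (t : ℕ → ℝ) k _ = (t : ℕ → ℝ)
        simp }
  have E : ContinuousMap.HomotopyEquiv (vwPhi (k+1) '' vwF n d x₀) (vwPhi k '' vwF n d x₀) :=
    ⟨f, g, ⟨H⟩, by rw [hfg]⟩
  exact E.contractibleSpace

theorem vw_main (n d : ℕ) (hd : 2 ≤ d) (hdn : d ≤ n) (x₀ : Fin n → ℝ) (hx₀ : Monotone x₀) :
    ContractibleSpace (vwF n d x₀) := by
  have hZ : ∀ k, d ≤ k → ContractibleSpace (vwPhi k '' vwF n d x₀) := by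
    intro k hk
    induction k, hk using Nat.le_induction with
    | base =>
      have : vwPhi d '' vwF n d x₀ = {vwPhi d x₀} := by
        ext t
        constructor
        · rintro ⟨x, hx, rfl⟩
          exact (vwPhi_eq_iff d x x₀).2 hx.2
        · rintro rfl
          exact ⟨x₀, ⟨hx₀, fun _ _ => rfl⟩, rfl⟩
      rw [this]
      infer_instance
    | succ k hk ih => exact vw_step n d k hd hk x₀ ih
  have hb : Set.BijOn (vwPhi n) (vwF n d x₀) (vwPhi n '' vwF n d x₀) := by
    refine Set.InjOn.bijOn_image ?_
    intro x hx y hy h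
    by_contra hne
    have h1 := (vwPhi_eq_iff n x y).1 h
    obtain ⟨s, σ, i, hks, -, hi, -⟩ := vw_A1 n n x y (fun _ => 1) hx.1 hy.1 hne (fun _ => one_pos)
      (by simpa [vwp] using h1)
    have := Fintype.card_le_of_injective i hi.injective
    simp at this; omega
  have := hZ n hdn
  exact (vwHomeo _ _ _ (vwF_compact n d hd x₀) (vwPhi_cont n) hb).contractibleSpace

/-- For `0 < d ≤ n` and `a ∈ ℝ^d`, the intersection of the
Vandermonde variety `V(a) = {x : p_j(x) = a_j, j = 1,…,d}` with the canonical Weyl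
chamber `W_c = {x : x_1 ≤ ⋯ ≤ x_n}` is either empty or contractible. -/
theorem vandermonde_inter_weyl_empty_or_contractible (n d : ℕ)
    (hn : 0 < n) (hd : 0 < d) (hdn : d ≤ n) (a : Fin d → ℝ) :
    ({x : Fin n → ℝ | (∀ j : Fin d, ∑ i, x i ^ ((j : ℕ) + 1) = a j) ∧ Monotone x} = ∅) ∨
      ContractibleSpace
        {x : Fin n → ℝ | (∀ j : Fin d, ∑ i, x i ^ ((j : ℕ) + 1) = a j) ∧ Monotone x} := by
  rcases Set.eq_empty_or_nonempty
    {x : Fin n → ℝ | (∀ j : Fin d, ∑ i, x i ^ ((j : ℕ) + 1) = a j) ∧ Monotone x} with h | h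
  · exact Or.inl h
  right
  by_cases hd2 : 2 ≤ d
  · obtain ⟨x₀, hx₀, hmono⟩ := h
    have : {x : Fin n → ℝ | (∀ j : Fin d, ∑ i, x i ^ ((j : ℕ) + 1) = a j) ∧ Monotone x} = vwF n d x₀ := by
      ext x
      constructor
      · rintro ⟨h1, h2⟩
        exact ⟨h2, fun j hj => (h1 ⟨j, hj⟩).trans (hx₀ ⟨j, hj⟩).symm⟩
      · rintro ⟨h1, h2⟩
        exact ⟨fun j => (h2 j j.2).trans (hx₀ j), h1⟩
    rw [this]
    exact vw_main n d hd2 hdn x₀ hmono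
  · have hd1 : d = 1 := by omega
    subst hd1
    refine Convex.contractibleSpace ?_ h
    rintro x ⟨hx1, hx2⟩ y ⟨hy1, hy2⟩ s t hs ht hst
    refine ⟨fun j => ?_, ?_⟩
    · have h1 := hx1 j
      have h2 := hy1 j
      have hj : (j:ℕ) = 0 := by omega
      simp only [hj, zero_add, pow_one, Pi.add_apply, Pi.smul_apply, smul_eq_mul] at *
      rw [Finset.sum_add_distrib, ← Finset.mul_sum, ← Finset.mul_sum, h1, h2, ← add_mul, hst, one_mul]
    · intro i j hij
      have h1 := mul_le_mul_of_nonneg_left (hx2 hij) hs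
      have h2 := mul_le_mul_of_nonneg_left (hy2 hij) ht
      simp only [Pi.add_apply, Pi.smul_apply, smul_eq_mul]
      linarith
end

section
/- Let n and d be positive integers with d < n, and let x ∈ ℝⁿ have at least d+1 pairwise distinct coordinates (i.e., more than d distinct values among x_1,…,x_n). Then the (d+1)×n matrix J with entries J_{j,i} = j·x_i^{j−1} for 1 ≤ j ≤ d+1, 1 ≤ i ≤ n has rank d+1; equivalently, the gradients of the power sums p_1,…,p_{d+1} at x are linearly independent. -/
/-- If `x ∈ ℝⁿ` has more than `d` distinct coordinate values
(with `d < n`), then the `(d+1) × n` Jacobian matrix `J` of `(p_1,…,p_{d+1})` at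
`x`, with entries `J j i = j · x_i^{j-1}`, has full rank `d + 1`. -/
theorem jacobian_full_rank (n d : ℕ) (hd : 0 < d) (hdn : d < n) (x : Fin n → ℝ)
    (hdist : d + 1 ≤ (Finset.univ.image x).card)
    (J : Matrix (Fin (d + 1)) (Fin n) ℝ)
    (hJ : ∀ j i, J j i = ((j : ℕ) + 1) * x i ^ (j : ℕ)) :
    J.rank = d + 1 := by
  have hli : LinearIndependent ℝ J.row := by
    rw [Fintype.linearIndependent_iff]
    intro g hg k
    let P : Polynomial ℝ :=
      ∑ j : Fin (d + 1), Polynomial.monomial (j : ℕ) (g j * (((j : ℕ) : ℝ) + 1))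
    have hP : P = 0 := by
      apply Polynomial.eq_zero_of_degree_lt_of_eval_finset_eq_zero (Finset.univ.image x)
      · refine lt_of_lt_of_le ?_ (Nat.cast_le.mpr hdist)
        refine (Polynomial.degree_sum_le _ _).trans_lt ?_
        rw [Finset.sup_lt_iff (WithBot.bot_lt_coe _)]
        intro j _
        exact (Polynomial.degree_monomial_le _ _).trans_lt (Nat.cast_lt.mpr j.2)
      · intro y hy
        obtain ⟨i, -, rfl⟩ := Finset.mem_image.mp hy
        have h := congrFun hg i
        simp only [Finset.sum_apply, Pi.smul_apply, smul_eq_mul, Matrix.row, hJ,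
          Pi.zero_apply] at h
        simp only [P, Polynomial.eval_finset_sum, Polynomial.eval_monomial]
        rw [← h]
        exact Finset.sum_congr rfl fun j _ => by ring
    have hc : P.coeff k = 0 := by rw [hP]; simp
    simp only [P, Polynomial.finset_sum_coeff, Polynomial.coeff_monomial, Fin.val_inj,
      Finset.sum_ite_eq', Finset.mem_univ, if_true] at hc
    exact (mul_eq_zero.mp hc).resolve_right (by positivity)
  simpa using hli.rank_matrix
end

section
/- Let n ≥ 2 and let Z be a nonempty, closed, connected subset of the canonical Weyl chamber W_c ⊆ ℝⁿ. Then the union ⋃_{σ ∈ S_n} σ·Z over all coordinate permutations of Z is connected if and only if for every i ∈ {1,…,n−1} the intersection Z ∩ {x ∈ ℝⁿ : x_i = x_{i+1}} is nonempty. -/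
/-- The canonical Weyl chamber `W_c = {x : x_1 ≤ ⋯ ≤ x_n}`. -/
def weylChamber (n : ℕ) : Set (Fin n → ℝ) := {x | Monotone x}

/-- The coordinate-permutation action of `S_n` on `ℝⁿ`: `(σ • x) i = x (σ⁻¹ i)`. -/
def permAct {n : ℕ} (σ : Equiv.Perm (Fin n)) (x : Fin n → ℝ) : Fin n → ℝ :=
  fun i => x (σ⁻¹ i)

/-- The `i`-th coordinate index, viewed in `Fin n`. -/
def lowIdx {n : ℕ} (i : Fin (n - 1)) : Fin n := ⟨i.1, by have := i.2; omega⟩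

/-- The `(i+1)`-st coordinate index, viewed in `Fin n`. -/
def highIdx {n : ℕ} (i : Fin (n - 1)) : Fin n := ⟨i.1 + 1, by have := i.2; omega⟩

/-- The wall `{x ∈ ℝⁿ : x_i = x_{i+1}}` of the canonical Weyl chamber. -/
def wall (n : ℕ) (i : Fin (n - 1)) : Set (Fin n → ℝ) :=
  {x | x (lowIdx i) = x (highIdx i)}

/-- For a nonempty, closed, connected subset `Z` of the canonical
Weyl chamber, the union `⋃_{σ ∈ S_n} σ·Z` is connected if and only if `Z` meets
every wall `{x : x_i = x_{i+1}}`, `i = 1, …, n-1`. -/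
theorem mirrored_union_connected_iff (n : ℕ) (hn : 2 ≤ n) (Z : Set (Fin n → ℝ))
    (hZsub : Z ⊆ weylChamber n) (hZne : Z.Nonempty) (hZcl : IsClosed Z)
    (hZconn : IsConnected Z) :
    IsConnected (⋃ σ : Equiv.Perm (Fin n), permAct σ '' Z) ↔
      ∀ i : Fin (n - 1), (Z ∩ wall n i).Nonempty := by
  have hcont : ∀ σ : Equiv.Perm (Fin n), Continuous (permAct σ) := fun σ => by
    unfold permAct; fun_prop
  constructor
  · intro hU i
    by_contra hne
    have hlt : ∀ x ∈ Z, x (lowIdx i) < x (highIdx i) := by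
      intro x hx
      refine lt_of_le_of_ne (hZsub hx ?_) ?_
      · simp [lowIdx, highIdx, Fin.le_def]
      · intro h
        exact hne ⟨x, hx, h⟩
    have hgap : ∀ x ∈ Z, ∀ a b : Fin n, a.1 ≤ i.1 → i.1 < b.1 → x a < x b := by
      intro x hx a b ha hb
      have h1 : x a ≤ x (lowIdx i) := hZsub hx (by simpa [lowIdx, Fin.le_def] using ha)
      have h2 : x (highIdx i) ≤ x b := hZsub hx (by
        simp only [highIdx, Fin.le_def]; omega)
      exact h1.trans_lt ((hlt x hx).trans_le h2)
    let A : Set (Fin n → ℝ) := ⋂ (j : Fin n) (k : Fin n) (_ : j.1 ≤ i.1 ∧ i.1 < k.1), {p | p j ≤ p k}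
    let B : Set (Fin n → ℝ) :=
      ⋃ (q : {q : Fin n × Fin n // q.1.1 ≤ i.1 ∧ i.1 < q.2.1}), {p | p q.1.2 ≤ p q.1.1}
    have hA : IsClosed A := by
      refine isClosed_iInter fun j => isClosed_iInter fun k => isClosed_iInter fun _ => ?_
      exact isClosed_le (continuous_apply _) (continuous_apply _)
    have hB : IsClosed B := by
      refine isClosed_iUnion_of_finite fun q => ?_
      exact isClosed_le (continuous_apply _) (continuous_apply _)
    have hmA : ∀ p, p ∈ A ↔ ∀ j k : Fin n, j.1 ≤ i.1 → i.1 < k.1 → p j ≤ p k := by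
      intro p
      simp only [A, Set.mem_iInter, Set.mem_ofPred_eq, and_imp]
    have hmB : ∀ p, p ∈ B ↔ ∃ j k : Fin n, j.1 ≤ i.1 ∧ i.1 < k.1 ∧ p k ≤ p j := by
      intro p; simp [B, and_assoc]
    obtain ⟨z, hz⟩ := hZne
    have hlow : (lowIdx i : Fin n).1 ≤ i.1 := le_rfl
    have hhigh : i.1 < (highIdx i : Fin n).1 := Nat.lt_succ_self _
    obtain ⟨p, hpU, hpA, hpB⟩ := isPreconnected_closed_iff.1 hU.isPreconnected A B hA hB
      (by
        intro p _
        by_cases h : p ∈ A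
        · exact Or.inl h
        · right
          rw [hmA] at h
          push Not at h
          obtain ⟨j, k, hj, hk, h⟩ := h
          exact (hmB p).2 ⟨j, k, hj, hk, h.le⟩)
      ⟨z, Set.mem_iUnion.2 ⟨1, z, hz, by funext j; simp [permAct]⟩,
        (hmA z).2 fun j k hj hk => (hgap z hz j k hj hk).le⟩
      ⟨permAct (Equiv.swap (lowIdx i) (highIdx i)) z,
        Set.mem_iUnion.2 ⟨_, z, hz, rfl⟩,
        (hmB _).2 ⟨lowIdx i, highIdx i, hlow, hhigh, by
          simpa [permAct] using (hlt z hz).le⟩⟩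
    obtain ⟨σ, x, hx, rfl⟩ := Set.mem_iUnion.1 hpU
    rw [hmA] at hpA
    rw [hmB] at hpB
    have key : ∀ P : Fin n → Prop, (∀ j, P j → P (σ⁻¹ j)) → ∀ j, P (σ⁻¹ j) → P j := by
      intro P hP j hj
      have := Equiv.Perm.perm_symm_on_of_perm_on_finite (f := σ⁻¹) (p := P) hP hj
      rwa [Equiv.symm_apply_apply] at this
    have hll : ∀ j : Fin n, j.1 ≤ i.1 → (σ⁻¹ j).1 ≤ i.1 := by
      intro j hj
      by_contra hcon
      have : ∃ k : Fin n, i.1 < k.1 ∧ ¬ i.1 < (σ⁻¹ k).1 := by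
        by_contra! hall
        exact absurd (key (fun k => i.1 < k.1) hall j (not_le.1 hcon)) (not_lt.2 hj)
      obtain ⟨k, hk, hk'⟩ := this
      exact absurd (hpA j k hj hk) (not_le.2 (hgap x hx _ _ (not_lt.1 hk') (not_le.1 hcon)))
    obtain ⟨j, k, hj, hk, h⟩ := hpB
    have hkh : i.1 < (σ⁻¹ k).1 := by
      by_contra hcon
      exact absurd (key (fun k => k.1 ≤ i.1) hll k (not_lt.1 hcon)) (not_le.2 hk)
    exact absurd h (not_le.2 (hgap x hx _ _ (hll j hj) hkh))
  · intro hw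
    obtain ⟨m, rfl⟩ : ∃ m, n = m + 1 := ⟨n - 1, by omega⟩
    let R : Equiv.Perm (Fin (m+1)) → Equiv.Perm (Fin (m+1)) → Prop := fun σ τ =>
      ((permAct σ '' Z) ∩ (permAct τ '' Z)).Nonempty
    have hsymm : ∀ σ τ, R σ τ → R τ σ := by
      intro σ τ h
      simpa only [R, Set.inter_comm] using h
    have hstep : ∀ (σ : Equiv.Perm (Fin (m+1))) (i : Fin m),
        R σ (σ * Equiv.swap i.castSucc i.succ) := by
      intro σ i
      obtain ⟨x, hx, hxi⟩ := hw i
      have hxi' : x i.castSucc = x i.succ := hxi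
      refine ⟨permAct σ x, ⟨x, hx, rfl⟩, x, hx, ?_⟩
      funext j
      simp only [permAct, mul_inv_rev, Equiv.swap_inv, Equiv.Perm.mul_apply]
      generalize σ⁻¹ j = a
      rw [Equiv.swap_apply_def]
      split_ifs with h1 h2
      · rw [h1, hxi']
      · rw [h2, hxi']
      · rfl
    have hreach : ∀ σ, Relation.ReflTransGen R 1 σ := by
      intro σ
      have hσ : σ ∈ Submonoid.closure
          (Set.range fun i : Fin m => Equiv.swap i.castSucc i.succ) := by
        rw [Equiv.Perm.mclosure_swap_castSucc_succ]; trivial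
      induction hσ using Submonoid.closure_induction_right with
      | one => exact Relation.ReflTransGen.refl
      | mul_right a _ b hb ih =>
        obtain ⟨i, rfl⟩ := hb
        exact ih.tail (hstep a i)
    refine ⟨?_, ?_⟩
    · obtain ⟨z, hz⟩ := hZne
      exact ⟨_, Set.mem_iUnion.2 ⟨1, z, hz, rfl⟩⟩
    · refine IsPreconnected.iUnion_of_reflTransGen
        (fun σ => hZconn.isPreconnected.image _ (hcont σ).continuousOn) fun σ τ => ?_
      have h1 : Relation.ReflTransGen R σ 1 := by
        have := (Relation.reflTransGen_swap (r := R)).2 (hreach σ)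
        exact Relation.ReflTransGen.mono (fun a b h => hsymm _ _ h) _ _ this
      exact h1.trans (hreach τ)
end

section
/- Let n ≥ 2, let Z be a nonempty, closed, connected subset of the canonical Weyl chamber W_c ⊆ ℝⁿ, let x ∈ Z, and let σ ∈ S_n. Then x and σ·x lie in the same connected component of ⋃_{τ ∈ S_n} τ·Z if and only if σ belongs to the subgroup of S_n generated by the adjacent transpositions (i,i+1) for which Z ∩ {x ∈ ℝⁿ : x_i = x_{i+1}} is nonempty. -/
lemma permAct_cont {n : ℕ} (τ : Equiv.Perm (Fin n)) : Continuous (permAct τ) := by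
  unfold permAct; fun_prop

lemma permAct_mul {n : ℕ} (τ ρ : Equiv.Perm (Fin n)) (z : Fin n → ℝ) :
    permAct (τ * ρ) z = permAct τ (permAct ρ z) := by
  funext i; simp [permAct, mul_inv_rev]

lemma permAct_one {n : ℕ} (z : Fin n → ℝ) : permAct 1 z = z := by
  funext i; simp [permAct]

lemma permAct_closed {n : ℕ} (τ : Equiv.Perm (Fin n)) {Z : Set (Fin n → ℝ)} (hZ : IsClosed Z) :
    IsClosed (permAct τ '' Z) := by
  have : permAct τ '' Z = permAct τ⁻¹ ⁻¹' Z := by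
    ext y
    constructor
    · rintro ⟨z, hz, rfl⟩
      simpa [← permAct_mul, permAct_one] using hz
    · intro hy
      exact ⟨_, hy, by simp [← permAct_mul, permAct_one]⟩
  rw [this]
  exact hZ.preimage (permAct_cont _)

lemma permAct_swap {n : ℕ} (i : Fin (n - 1)) {z : Fin n → ℝ} (hz : z ∈ wall n i) :
    permAct (Equiv.swap (lowIdx i) (highIdx i)) z = z := by
  have hz' : z (lowIdx i) = z (highIdx i) := hz
  funext j
  simp only [permAct, Equiv.swap_inv]
  by_cases h1 : j = lowIdx i
  · subst h1; simp [hz']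
  by_cases h2 : j = highIdx i
  · subst h2; simp [hz']
  rw [Equiv.swap_apply_of_ne_of_ne h1 h2]

lemma swap_mem_of_eq {n : ℕ} (z : Fin n → ℝ) (hz : Monotone z)
    (H : Subgroup (Equiv.Perm (Fin n)))
    (hH : ∀ i : Fin (n - 1), z ∈ wall n i → Equiv.swap (lowIdx i) (highIdx i) ∈ H)
    (a : Fin n) (k : ℕ) : ∀ hk : a.1 + k < n, z a = z ⟨a.1 + k, hk⟩ →
      Equiv.swap a ⟨a.1 + k, hk⟩ ∈ H := by
  induction k with
  | zero => intro hk _; simp [H.one_mem, ← Equiv.Perm.one_def]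
  | succ k ih =>
    intro hk h
    have hk' : a.1 + k < n := by omega
    have h1 : z a ≤ z ⟨a.1 + k, hk'⟩ := hz (by simp [Fin.le_def])
    have h2 : z ⟨a.1 + k, hk'⟩ ≤ z ⟨a.1 + (k + 1), hk⟩ := hz (by simp [Fin.le_def])
    have h3 := ih hk' (le_antisymm h1 (h ▸ h2))
    have h4 := hH ⟨a.1 + k, by omega⟩ (show z ⟨a.1 + k, hk'⟩ = z ⟨a.1 + (k + 1), hk⟩ from
      le_antisymm h2 (h ▸ h1))
    exact SubmonoidClass.swap_mem_trans H h3 h4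

lemma stab_mem {n : ℕ} (z : Fin n → ℝ) (hz : Monotone z)
    (S : Set (Equiv.Perm (Fin n))) (hS : ∀ s ∈ S, s.IsSwap)
    (hH : ∀ i : Fin (n - 1), z ∈ wall n i → Equiv.swap (lowIdx i) (highIdx i) ∈ Subgroup.closure S)
    (π : Equiv.Perm (Fin n)) (hπ : ∀ a, z (π a) = z a) : π ∈ Subgroup.closure S := by
  rw [mem_closure_isSwap hS]
  refine ⟨Set.toFinite _, fun a => ?_⟩
  have key : Equiv.swap a (π a) ∈ Subgroup.closure S := by
    rcases le_total a (π a) with h | h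
    · have h' : (⟨a.1 + ((π a).1 - a.1), by omega⟩ : Fin n) = π a := Fin.ext (by simp; omega)
      have := swap_mem_of_eq z hz _ hH a ((π a).1 - a.1) (by omega) (by rw [h', hπ])
      rwa [h'] at this
    · have h' : (⟨(π a).1 + (a.1 - (π a).1), by omega⟩ : Fin n) = a := Fin.ext (by simp; omega)
      have := swap_mem_of_eq z hz _ hH (π a) (a.1 - (π a).1) (by omega) (by rw [h', hπ])
      rwa [h', Equiv.swap_comm] at this
  exact ⟨⟨_, key⟩, by simp [Subgroup.smul_def]⟩

/-- Let `Z` be a nonempty, closed, connected subset of the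
canonical Weyl chamber, `x ∈ Z` and `σ ∈ S_n`. Then `x` and `σ·x` lie in the same
connected component of `⋃_{τ ∈ S_n} τ·Z` if and only if `σ` lies in the subgroup
generated by the adjacent transpositions `(i, i+1)` whose wall meets `Z`. -/
theorem mirrored_transposition_connectivity (n : ℕ) (hn : 2 ≤ n) (Z : Set (Fin n → ℝ))
    (hZsub : Z ⊆ weylChamber n) (hZne : Z.Nonempty) (hZcl : IsClosed Z)
    (hZconn : IsConnected Z) (x : Fin n → ℝ) (hx : x ∈ Z) (σ : Equiv.Perm (Fin n)) :
    permAct σ x ∈ connectedComponentIn (⋃ τ : Equiv.Perm (Fin n), permAct τ '' Z) x ↔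
      σ ∈ Subgroup.closure {τ : Equiv.Perm (Fin n) |
        ∃ i : Fin (n - 1), τ = Equiv.swap (lowIdx i) (highIdx i) ∧
          (Z ∩ wall n i).Nonempty} := by
  set S : Set (Equiv.Perm (Fin n)) := {τ : Equiv.Perm (Fin n) |
        ∃ i : Fin (n - 1), τ = Equiv.swap (lowIdx i) (highIdx i) ∧
          (Z ∩ wall n i).Nonempty} with hSdef
  have hxU : x ∈ ⋃ τ : Equiv.Perm (Fin n), permAct τ '' Z :=
    Set.mem_iUnion.mpr ⟨1, x, hx, permAct_one x⟩
  have hSswap : ∀ s ∈ S, s.IsSwap := by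
    rintro s ⟨i, rfl, -⟩
    exact ⟨_, _, by simp [lowIdx, highIdx], rfl⟩
  have hdisj : ∀ τ ρ : Equiv.Perm (Fin n), ∀ z ∈ Z, ∀ w ∈ Z, permAct τ z = permAct ρ w →
      τ ∈ Subgroup.closure S → ρ ∈ Subgroup.closure S := by
    intro τ ρ z hz w hw h hτ
    have h1 : permAct (ρ⁻¹ * τ) z = w := by
      rw [permAct_mul, h, ← permAct_mul]; simp [permAct_one]
    have h2 : z ∘ ((ρ⁻¹ * τ)⁻¹ : Equiv.Perm (Fin n)) = w := h1
    have hwm : Monotone w := hZsub hw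
    have hzm : Monotone z := hZsub hz
    have h3 : z ∘ (1 : Equiv.Perm (Fin n)) = z ∘ ((ρ⁻¹ * τ)⁻¹ : Equiv.Perm (Fin n)) :=
      Tuple.unique_monotone (f := z) (σ := 1) (τ := (ρ⁻¹ * τ)⁻¹) (by simpa using hzm)
        (by rw [h2]; exact hwm)
    have h4 : (ρ⁻¹ * τ)⁻¹ ∈ Subgroup.closure S := by
      refine stab_mem z hzm S hSswap (fun i hi => ?_) _ (fun a => ?_)
      · exact Subgroup.subset_closure ⟨i, rfl, z, hz, hi⟩
      · exact (congrFun h3 a).symm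
    have h5 := (Subgroup.closure S).mul_mem hτ h4
    simpa using h5
  constructor
  · intro hσ
    by_contra hσH
    set B : Set (Fin n → ℝ) := ⋃ τ ∈ {τ | τ ∈ Subgroup.closure S}, permAct τ '' Z with hB
    set C : Set (Fin n → ℝ) := ⋃ τ ∈ {τ | τ ∉ Subgroup.closure S}, permAct τ '' Z with hC
    have hBc : IsClosed B := (Set.toFinite _).isClosed_biUnion (fun τ _ => permAct_closed τ hZcl)
    have hCc : IsClosed C := (Set.toFinite _).isClosed_biUnion (fun τ _ => permAct_closed τ hZcl)
    have hpre := isPreconnected_closed_iff.mp (isPreconnected_connectedComponentIn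
      (F := ⋃ τ : Equiv.Perm (Fin n), permAct τ '' Z) (x := x)) B C hBc hCc (by
        refine (connectedComponentIn_subset _ _).trans ?_
        refine Set.iUnion_subset fun τ => ?_
        by_cases h : τ ∈ Subgroup.closure S
        · exact (Set.subset_biUnion_of_mem (u := fun τ => permAct τ '' Z) h).trans
            Set.subset_union_left
        · exact (Set.subset_biUnion_of_mem
            (s := {τ | τ ∉ Subgroup.closure S}) (u := fun τ => permAct τ '' Z) h).trans
            Set.subset_union_right)
      ⟨x, mem_connectedComponentIn hxU,
        Set.mem_biUnion (Subgroup.one_mem (Subgroup.closure S)) ⟨x, hx, permAct_one x⟩⟩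
      ⟨permAct σ x, hσ, Set.mem_biUnion (s := {τ | τ ∉ Subgroup.closure S}) hσH ⟨x, hx, rfl⟩⟩
    obtain ⟨y, -, hyB, hyC⟩ := hpre
    obtain ⟨τ, hτ, z, hz, rfl⟩ := Set.mem_iUnion₂.mp hyB
    obtain ⟨ρ, hρ, w, hw, h⟩ := Set.mem_iUnion₂.mp hyC
    exact hρ (hdisj τ ρ z hz w hw h.symm hτ)
  · have step : ∀ (τ s : Equiv.Perm (Fin n)), s ∈ S →
        permAct τ x ∈ connectedComponentIn (⋃ τ : Equiv.Perm (Fin n), permAct τ '' Z) x →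
        permAct (τ * s) x ∈
          connectedComponentIn (⋃ τ : Equiv.Perm (Fin n), permAct τ '' Z) x := by
      rintro τ s ⟨i, rfl, z, hz, hzi⟩ h
      rw [connectedComponentIn_eq h]
      set s := Equiv.swap (lowIdx i) (highIdx i)
      have hp : IsPreconnected (permAct τ '' Z ∪ permAct (τ * s) '' Z) :=
        IsPreconnected.union (permAct τ z) ⟨z, hz, rfl⟩
          ⟨z, hz, by rw [permAct_mul, permAct_swap i hzi]⟩
          (hZconn.isPreconnected.image _ (permAct_cont _).continuousOn)
          (hZconn.isPreconnected.image _ (permAct_cont _).continuousOn)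
      exact hp.subset_connectedComponentIn (Or.inl ⟨x, hx, rfl⟩)
        (Set.union_subset (Set.subset_iUnion (fun τ => permAct τ '' Z) τ)
          (Set.subset_iUnion (fun τ => permAct τ '' Z) (τ * s))) (Or.inr ⟨x, hx, rfl⟩)
    intro hσ
    induction hσ using Subgroup.closure_induction_right with
    | one => rw [permAct_one]; exact mem_connectedComponentIn hxU
    | mul_right τ _ s hs ih => exact step τ s hs ih
    | mul_inv_cancel τ _ s hs ih =>
      have : s⁻¹ = s := by obtain ⟨i, rfl, -⟩ := hs; exact Equiv.swap_inv _ _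
      rw [this]; exact step τ s hs ih
end
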